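/- arXiv:2510.03994 — 6 statements merged into one kernel-verified Lean document; each statement's English description precedes it below -/
import Mathlib

section
/- For every measurable s: ℝ^d → ℝ^d with ∫ ‖s(x)‖² p(x) dx < ∞, the identity E[‖s(X) − ∇ log p(X)‖²] = E[‖s(X) + (X − m X0)/σ²‖²] + E[‖∇ log p(X)‖²] − E[‖(X − m X0)/σ²‖²] holds, where the expectations are over (X0, Z). In particular, the difference E[‖s(X) − ∇ log p(X)‖²] − E[‖s(X) + (X − m X0)/σ²‖²] is a finite constant that does not depend on s. -/
/-!
Write `E = (X - m X0)/σ²` and let `p(x, y) = condDens x y * p0 y` be the joint density of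
`(X, X0)`. Expanding the squares,
`‖s - ∇log p‖² = ‖s + E‖² + ‖∇log p‖² - ‖E‖² - 2 ⟨s, ∇log p + E⟩`,
so the identity says that the last term has mean zero. Differentiating
`p(x) = ∫ p(x, y) dy` under the integral sign gives `∇log p(x) · p(x) = -∫ E p(x, y) dy`
(`score_mul_density`), i.e. the score is the conditional expectation of `-E` given `X`, and
integrating over `y` first kills the cross term.

Every term has to be integrable for the joint law. For `s` this is the hypothesis; for `E` it is
the second moment of the Gaussian (`integrable_noise`); for the score it follows from
`abs_score_le`, a linear growth bound coming from the compact support of `p0`. The expectations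
over `(X0, Z)` are transported to the joint law of `(X0, X)` by `iterated_eq_joint`.
-/

open MeasureTheory Finset

/-- The standard Gaussian density on `ℝ^d`. -/
noncomputable def gaussK (d : ℕ) (y : Fin d → ℝ) : ℝ :=
  (2 * Real.pi) ^ (-(d : ℝ) / 2) * Real.exp (-(∑ i, (y i) ^ 2) / 2)

/-- The density of `X = m X0 + σ Z` when `X0` has density `p0` and `Z` is standard Gaussian. -/
noncomputable def diffusedDensity (d : ℕ) (p0 : (Fin d → ℝ) → ℝ) (m σ : ℝ)
    (x : Fin d → ℝ) : ℝ :=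
  ∫ y : Fin d → ℝ,
    (2 * Real.pi * σ ^ 2) ^ (-(d : ℝ) / 2) *
      Real.exp (-(∑ i, (x i - m * y i) ^ 2) / (2 * σ ^ 2)) * p0 y

/-- The score `∇ log p` of a positive density `p`, expressed coordinatewise via `fderiv`. -/
noncomputable def score (d : ℕ) (p : (Fin d → ℝ) → ℝ) (x : Fin d → ℝ) : Fin d → ℝ :=
  fun i => fderiv ℝ (fun z => Real.log (p z)) x (Pi.single i (1 : ℝ))

/-! ### The conditional density and the change of variables -/

/-- The conditional density at `x` of `X = m X0 + σ Z` given `X0 = y`. -/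
noncomputable def condDens (d : ℕ) (m σ : ℝ) (x y : Fin d → ℝ) : ℝ :=
  (2 * Real.pi * σ ^ 2) ^ (-(d : ℝ) / 2) *
    Real.exp (-(∑ i, (x i - m * y i) ^ 2) / (2 * σ ^ 2))

lemma condDens_nonneg (d : ℕ) (m σ : ℝ) (x y : Fin d → ℝ) : 0 ≤ condDens d m σ x y := by
  unfold condDens; positivity

lemma condDens_pos (d : ℕ) (m : ℝ) {σ : ℝ} (hσ : 0 < σ) (x y : Fin d → ℝ) :
    0 < condDens d m σ x y := by
  unfold condDens; positivity

lemma condDens_le (d : ℕ) (m σ : ℝ) (x y : Fin d → ℝ) :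
    condDens d m σ x y ≤ (2 * Real.pi * σ ^ 2) ^ (-(d : ℝ) / 2) := by
  unfold condDens
  refine mul_le_of_le_one_right (by positivity) (Real.exp_le_one_iff.2 ?_)
  rw [neg_div]
  exact neg_nonpos.2 (by positivity)

lemma continuous_condDens (d : ℕ) (m σ : ℝ) :
    Continuous (fun q : (Fin d → ℝ) × (Fin d → ℝ) => condDens d m σ q.2 q.1) := by
  unfold condDens; fun_prop

lemma continuous_condDens_right (d : ℕ) (m σ : ℝ) (x : Fin d → ℝ) :
    Continuous (fun y : Fin d → ℝ => condDens d m σ x y) := by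
  unfold condDens; fun_prop

lemma gaussK_eq (d : ℕ) (m : ℝ) {σ : ℝ} (hσ : 0 < σ) (y z : Fin d → ℝ) :
    gaussK d z = σ ^ d * condDens d m σ (fun j => m * y j + σ * z j) y := by
  unfold gaussK condDens
  have h1 : (2 * Real.pi * σ ^ 2) ^ (-(d : ℝ) / 2)
      = (2 * Real.pi) ^ (-(d : ℝ) / 2) * (σ ^ d)⁻¹ := by
    rw [Real.mul_rpow (by positivity) (by positivity), ← Real.rpow_natCast σ 2,
      ← Real.rpow_mul hσ.le, ← Real.rpow_natCast σ d, ← Real.rpow_neg hσ.le]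
    congr 2
    push_cast
    ring
  have h2 : -(∑ i, (m * y i + σ * z i - m * y i) ^ 2) / (2 * σ ^ 2) = -(∑ i, (z i) ^ 2) / 2 := by
    have : ∀ i, (m * y i + σ * z i - m * y i) ^ 2 = σ ^ 2 * (z i) ^ 2 := fun i => by ring
    simp only [this, ← Finset.mul_sum]
    field_simp
  rw [h1, h2]
  field_simp

/-- The change of variables `x = m y + σ z` for fixed `y`. No integrability is needed, since both
sides are junk together. -/
lemma integral_gaussK_eq (d : ℕ) (m : ℝ) {σ : ℝ} (hσ : 0 < σ) (f : (Fin d → ℝ) → ℝ)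
    (y : Fin d → ℝ) :
    ∫ z, f (fun j => m * y j + σ * z j) * gaussK d z = ∫ x, f x * condDens d m σ x y := by
  rw [← integral_add_left_eq_self (fun x => f x * condDens d m σ x y) (m • y)]
  have h := Measure.integral_comp_smul (volume : Measure (Fin d → ℝ))
    (fun x => f (m • y + x) * condDens d m σ (m • y + x) y) σ
  have h3 : ∀ z, f (fun j => m * y j + σ * z j) * gaussK d z
      = σ ^ d * (f (m • y + σ • z) * condDens d m σ (m • y + σ • z) y) := by
    intro z
    rw [gaussK_eq d m hσ y z]
    have : (fun j => m * y j + σ * z j) = m • y + σ • z := rfl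
    rw [this]; ring
  simp only [h3]
  rw [integral_const_mul, h]
  simp only [Module.finrank_fintype_fun_eq_card, Fintype.card_fin, smul_eq_mul]
  rw [abs_of_pos (by positivity), ← mul_assoc, mul_inv_cancel₀ (by positivity), one_mul]

lemma integrable_mul_condDens (d : ℕ) (m : ℝ) {σ : ℝ} (hσ : 0 < σ) (f : (Fin d → ℝ) → ℝ)
    (y : Fin d → ℝ) (h : Integrable fun z => f (fun j => m * y j + σ * z j) * gaussK d z) :
    Integrable fun x => f x * condDens d m σ x y := by
  have h3 : ∀ z, f (fun j => m * y j + σ * z j) * gaussK d z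
      = σ ^ d * (f (m • y + σ • z) * condDens d m σ (m • y + σ • z) y) := by
    intro z
    rw [gaussK_eq d m hσ y z]
    have : (fun j => m * y j + σ * z j) = m • y + σ • z := rfl
    rw [this]; ring
  simp only [h3] at h
  have h4 := (integrable_const_mul_iff (isUnit_iff_ne_zero.2 (by positivity : σ ^ d ≠ 0)) _).1 h
  have h5 := (integrable_comp_smul_iff volume
    (fun x => f (m • y + x) * condDens d m σ (m • y + x) y) hσ.ne').1 h4
  simpa using h5.comp_add_left (-(m • y))

/-! ### Gaussian moments and integrability for the joint law -/

lemma integrable_exp_neg_sum_sq (d : ℕ) {b : ℝ} (hb : 0 < b) :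
    Integrable (fun z : Fin d → ℝ => Real.exp (-b * ∑ i, (z i) ^ 2)) := by
  have := Integrable.fintype_prod (ι := Fin d) (f := fun _ t => Real.exp (-b * t ^ 2))
    (μ := fun _ => volume) (fun _ => integrable_exp_neg_mul_sq hb)
  simp only [← Real.exp_sum, ← Finset.mul_sum] at this
  exact this

lemma measurable_gaussK (d : ℕ) : Measurable (gaussK d) := by
  unfold gaussK; fun_prop

lemma integrable_gaussK (d : ℕ) : Integrable (gaussK d) := by
  unfold gaussK
  refine Integrable.const_mul ?_ _
  convert integrable_exp_neg_sum_sq d (b := 1 / 2) (by norm_num) using 3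
  ring

lemma integrable_sq_mul_gaussK (d : ℕ) (i : Fin d) :
    Integrable (fun z => (z i) ^ 2 * gaussK d z) := by
  refine ((integrable_exp_neg_sum_sq d (b := 1 / 4) (by norm_num)).const_mul
    (4 * (2 * Real.pi) ^ (-(d : ℝ) / 2))).mono'
    ((by fun_prop : Measurable fun z : Fin d → ℝ => (z i) ^ 2).mul
      (measurable_gaussK d)).aestronglyMeasurable (ae_of_all _ fun z => ?_)
  unfold gaussK
  rw [Real.norm_of_nonneg (by positivity)]
  set S := ∑ i, (z i) ^ 2 with hS
  have h1 : (z i) ^ 2 ≤ S :=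
    Finset.single_le_sum (f := fun i => (z i) ^ 2) (fun j _ => sq_nonneg _) (Finset.mem_univ i)
  have h2 : (z i) ^ 2 ≤ 4 * Real.exp (S / 4) := by
    have := Real.add_one_le_exp (S / 4); linarith
  have h3 : Real.exp (-(1 / 4) * S) = Real.exp (S / 4) * Real.exp (-S / 2) := by
    rw [← Real.exp_add]; congr 1; ring
  rw [h3]
  calc (z i) ^ 2 * ((2 * Real.pi) ^ (-(d : ℝ) / 2) * Real.exp (-S / 2))
      ≤ (4 * Real.exp (S / 4)) * ((2 * Real.pi) ^ (-(d : ℝ) / 2) * Real.exp (-S / 2)) := by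
        gcongr
    _ = _ := by ring

/-- The joint density of `(X0, X)` at `q = (y, x)`. -/
noncomputable def jointDens (d : ℕ) (p0 : (Fin d → ℝ) → ℝ) (m σ : ℝ)
    (q : (Fin d → ℝ) × (Fin d → ℝ)) : ℝ :=
  condDens d m σ q.2 q.1 * p0 q.1

lemma measurable_jointDens (d : ℕ) {p0 : (Fin d → ℝ) → ℝ} (hmeas : Measurable p0) (m σ : ℝ) :
    Measurable (jointDens d p0 m σ) :=
  (continuous_condDens d m σ).measurable.mul (hmeas.comp measurable_fst)

/-- A nonnegative function of the noise `Z = (X - m X0) / σ` is integrable under the joint law if it is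
integrable under the Gaussian law. -/
lemma integrable_noise (d : ℕ) {p0 : (Fin d → ℝ) → ℝ} (hmeas : Measurable p0)
    (hnonneg : ∀ y, 0 ≤ p0 y) (hint : Integrable p0) (m : ℝ) {σ : ℝ} (hσ : 0 < σ)
    (h : (Fin d → ℝ) → ℝ) (hh : Measurable h) (hh0 : ∀ z, 0 ≤ h z)
    (hi : Integrable fun z => h z * gaussK d z) :
    Integrable (fun q : (Fin d → ℝ) × (Fin d → ℝ) =>
      h (fun j => (q.2 j - m * q.1 j) / σ) * jointDens d p0 m σ q) (volume.prod volume) := by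
  have hz : ∀ y z : Fin d → ℝ, (fun j => ((m * y j + σ * z j) - m * y j) / σ) = z := by
    intro y z; funext j; field_simp; ring
  have hm1 : Measurable fun q : (Fin d → ℝ) × (Fin d → ℝ) =>
      h (fun j => (q.2 j - m * q.1 j) / σ) := hh.comp (by fun_prop)
  have hm2 : Measurable fun q : (Fin d → ℝ) × (Fin d → ℝ) =>
      h (fun j => (q.2 j - m * q.1 j) / σ) * jointDens d p0 m σ q :=
    hm1.mul (measurable_jointDens d hmeas m σ)
  refine (integrable_prod_iff hm2.aestronglyMeasurable).2 ⟨?_, ?_⟩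
  · refine ae_of_all _ fun y => ?_
    have := integrable_mul_condDens d m hσ (fun x => h (fun j => (x j - m * y j) / σ)) y
      (by simpa only [hz] using hi)
    simpa only [jointDens, mul_assoc] using this.mul_const (p0 y)
  · have : ∀ y : Fin d → ℝ, ∫ x, ‖h (fun j => (x j - m * y j) / σ) * jointDens d p0 m σ (y, x)‖
        = (∫ z, h z * gaussK d z) * p0 y := by
      intro y
      have h2 := integral_gaussK_eq d m hσ (fun x => h (fun j => (x j - m * y j) / σ)) y
      simp only [hz] at h2
      rw [h2, ← integral_mul_const]
      refine integral_congr_ae (ae_of_all _ fun x => ?_)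
      simp only [jointDens]
      rw [Real.norm_of_nonneg (mul_nonneg (hh0 _)
        (mul_nonneg (condDens_nonneg ..) (hnonneg _)))]
      ring
    simp only [this]
    exact hint.const_mul _

/-- If `a²` and `b²` are integrable against a weight, so is `a b`. -/
lemma integrable_mul_weight {α : Type*} [MeasurableSpace α] {μ : Measure α} {a b w : α → ℝ}
    (ha : Measurable a) (hb : Measurable b) (hw : Measurable w) (hw0 : ∀ q, 0 ≤ w q)
    (ha2 : Integrable (fun q => (a q) ^ 2 * w q) μ)
    (hb2 : Integrable (fun q => (b q) ^ 2 * w q) μ) :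
    Integrable (fun q => a q * b q * w q) μ := by
  refine (ha2.add hb2).mono' ((ha.mul hb).mul hw).aestronglyMeasurable (ae_of_all _ fun q => ?_)
  simp only [Pi.add_apply]
  rw [norm_mul, Real.norm_of_nonneg (hw0 q), ← add_mul, Real.norm_eq_abs]
  refine mul_le_mul_of_nonneg_right ?_ (hw0 q)
  rw [abs_le]
  constructor <;> nlinarith [sq_nonneg (a q + b q), sq_nonneg (a q - b q)]

/-! ### The score as a conditional expectation -/

lemma integrable_slice (d : ℕ) {p0 : (Fin d → ℝ) → ℝ} (hint : Integrable p0) (m σ : ℝ)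
    (x : Fin d → ℝ) : Integrable fun y => condDens d m σ x y * p0 y :=
  hint.bdd_mul (c := (2 * Real.pi * σ ^ 2) ^ (-(d : ℝ) / 2))
    (continuous_condDens_right d m σ x).aestronglyMeasurable
    (ae_of_all _ fun y => by
      rw [Real.norm_of_nonneg (condDens_nonneg ..)]; exact condDens_le ..)

lemma diffusedDensity_pos (d : ℕ) {p0 : (Fin d → ℝ) → ℝ} (hnonneg : ∀ y, 0 ≤ p0 y)
    (hprob : (∫ y : Fin d → ℝ, p0 y) = 1) (m : ℝ) {σ : ℝ} (hσ : 0 < σ) (x : Fin d → ℝ) :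
    0 < diffusedDensity d p0 m σ x := by
  have hint := integrable_of_integral_eq_one hprob
  have h0 : 0 < volume (Function.support p0) :=
    (integral_pos_iff_support_of_nonneg hnonneg hint).1 (by rw [hprob]; exact one_pos)
  change 0 < ∫ y, condDens d m σ x y * p0 y
  rw [integral_pos_iff_support_of_nonneg
    (fun y => mul_nonneg (condDens_nonneg ..) (hnonneg y)) (integrable_slice d hint m σ x)]
  convert h0 using 2
  ext y
  simp [(condDens_pos d m hσ x y).ne']

lemma abs_sub_le_of_support {d : ℕ} {p0 : (Fin d → ℝ) → ℝ} {R : ℝ}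
    (hR : ∀ y : Fin d → ℝ, p0 y ≠ 0 → ∀ i, |y i| ≤ R) {m : ℝ} (hm : 0 < m)
    {y : Fin d → ℝ} (hy : p0 y ≠ 0) (x : Fin d → ℝ) (i : Fin d) :
    |x i - m * y i| ≤ |x i| + m * R := by
  have h1 := hR y hy i
  calc |x i - m * y i| ≤ |x i| + |m * y i| := abs_sub _ _
    _ ≤ _ := by rw [abs_mul, abs_of_pos hm]; gcongr

/-- The `x`-derivative of the joint density. -/
noncomputable def jointGrad (d : ℕ) (p0 : (Fin d → ℝ) → ℝ) (m σ : ℝ) (x y : Fin d → ℝ) :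
    (Fin d → ℝ) →L[ℝ] ℝ :=
  (-(condDens d m σ x y * p0 y)) •
    ∑ i, ((x i - m * y i) / σ ^ 2) • (ContinuousLinearMap.proj i : (Fin d → ℝ) →L[ℝ] ℝ)

lemma hasFDerivAt_condDens (d : ℕ) (p0 : (Fin d → ℝ) → ℝ) (m : ℝ) {σ : ℝ} (hσ : 0 < σ)
    (x y : Fin d → ℝ) :
    HasFDerivAt (fun x => condDens d m σ x y * p0 y) (jointGrad d p0 m σ x y) x := by
  have h1 : ∀ i, HasFDerivAt (fun x : Fin d → ℝ => (x i - m * y i) ^ 2)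
      ((2 * (x i - m * y i)) • (ContinuousLinearMap.proj i : (Fin d → ℝ) →L[ℝ] ℝ)) x := by
    intro i
    have := ((hasFDerivAt_apply (𝕜 := ℝ) i x).sub_const (m * y i)).pow 2
    simpa using this
  have h2 := ((HasFDerivAt.fun_sum fun i (_ : i ∈ Finset.univ) => h1 i).const_mul
    (-(1 / (2 * σ ^ 2)))).exp
  have h3 := (h2.const_mul ((2 * Real.pi * σ ^ 2) ^ (-(d : ℝ) / 2))).mul_const (p0 y)
  refine (h3.congr_fderiv ?_).congr_of_eventuallyEq (Filter.Eventually.of_forall fun x => ?_)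
  · ext v
    simp only [jointGrad, condDens, smul_apply, _root_.sum_apply,
      ContinuousLinearMap.proj_apply, smul_eq_mul]
    have e : ∑ i, (x i - m * y i) / σ ^ 2 * v i
        = (1 / (2 * σ ^ 2)) * ∑ i, 2 * (x i - m * y i) * v i := by
      rw [Finset.mul_sum]; refine Finset.sum_congr rfl fun i _ => ?_; field_simp
    have e2 : -(1 / (2 * σ ^ 2)) * ∑ i, (x i - m * y i) ^ 2
        = -(∑ i, (x i - m * y i) ^ 2) / (2 * σ ^ 2) := by ring
    rw [e, e2]; ring
  · simp only [condDens]
    congr 3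
    ring

lemma norm_jointGrad_le (d : ℕ) {p0 : (Fin d → ℝ) → ℝ} (hnonneg : ∀ y, 0 ≤ p0 y) {R : ℝ}
    (hR : ∀ y : Fin d → ℝ, p0 y ≠ 0 → ∀ i, |y i| ≤ R) {m σ : ℝ} (hm : 0 < m)
    (x y : Fin d → ℝ) {B : ℝ} (hB : ‖x‖ ≤ B) :
    ‖jointGrad d p0 m σ x y‖
      ≤ ((2 * Real.pi * σ ^ 2) ^ (-(d : ℝ) / 2) * (d * ((B + m * R) / σ ^ 2))) * p0 y := by
  by_cases hy : p0 y = 0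
  · simp [jointGrad, hy]
  have hsum : ‖∑ i, ((x i - m * y i) / σ ^ 2) •
      (ContinuousLinearMap.proj i : (Fin d → ℝ) →L[ℝ] ℝ)‖ ≤ d * ((B + m * R) / σ ^ 2) := by
    refine (norm_sum_le_of_le (f := _) (n := fun _ => (B + m * R) / σ ^ 2) _
      fun i _ => ?_).trans (by simp)
    rw [norm_smul, norm_div, Real.norm_of_nonneg (sq_nonneg σ), Real.norm_eq_abs]
    have hp : ‖(ContinuousLinearMap.proj i : (Fin d → ℝ) →L[ℝ] ℝ)‖ ≤ 1 :=
      ContinuousLinearMap.opNorm_le_bound _ zero_le_one fun v => by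
        simpa using norm_le_pi_norm v i
    have h1 := abs_sub_le_of_support hR hm hy x i
    have h2 : |x i| ≤ ‖x‖ := norm_le_pi_norm x i
    refine (mul_le_of_le_one_right (by positivity) hp).trans ?_
    gcongr
    linarith
  unfold jointGrad
  rw [norm_smul, norm_neg, Real.norm_of_nonneg (mul_nonneg (condDens_nonneg ..) (hnonneg y))]
  have hc := condDens_le d m σ x y
  have hp := hnonneg y
  calc condDens d m σ x y * p0 y * _
      ≤ (2 * Real.pi * σ ^ 2) ^ (-(d : ℝ) / 2) * p0 y * (d * ((B + m * R) / σ ^ 2)) := by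
        gcongr
    _ = _ := by ring

/-- Differentiating under the integral sign: `∂ᵢ log p(x) · p(x) = -∫ (xᵢ - m yᵢ)/σ² p(x, y) dy`,
that is, the score at `x` is the conditional expectation of `-(X - m X0)/σ²` given `X = x`. -/
lemma score_mul_density (d : ℕ) {p0 : (Fin d → ℝ) → ℝ}
    (hnonneg : ∀ y, 0 ≤ p0 y) (hprob : (∫ y : Fin d → ℝ, p0 y) = 1) {R : ℝ}
    (hR : ∀ y : Fin d → ℝ, p0 y ≠ 0 → ∀ i, |y i| ≤ R) {m σ : ℝ} (hm : 0 < m) (hσ : 0 < σ)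
    (x : Fin d → ℝ) (i : Fin d) :
    Integrable (fun y => (x i - m * y i) / σ ^ 2 * (condDens d m σ x y * p0 y)) ∧
    score d (diffusedDensity d p0 m σ) x i * diffusedDensity d p0 m σ x
      = -∫ y, (x i - m * y i) / σ ^ 2 * (condDens d m σ x y * p0 y) := by
  have hint := integrable_of_integral_eq_one hprob
  have hmg : AEStronglyMeasurable (jointGrad d p0 m σ x) volume := by
    have hc : Continuous fun y : Fin d → ℝ => ∑ i, ((x i - m * y i) / σ ^ 2) •
        (ContinuousLinearMap.proj i : (Fin d → ℝ) →L[ℝ] ℝ) :=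
      continuous_finsetSum _ fun i _ =>
        (by fun_prop : Continuous fun y : Fin d → ℝ => (x i - m * y i) / σ ^ 2).smul
          continuous_const
    exact (integrable_slice d hint m σ x).aestronglyMeasurable.neg.smul hc.aestronglyMeasurable
  have hgi : Integrable (jointGrad d p0 m σ x) :=
    (hint.const_mul _).mono' hmg (ae_of_all _ fun y => norm_jointGrad_le d hnonneg hR hm x y le_rfl)
  have happ : ∀ y, jointGrad d p0 m σ x y (Pi.single i 1)
      = -((x i - m * y i) / σ ^ 2 * (condDens d m σ x y * p0 y)) := by
    intro y
    simp [jointGrad, Pi.single_apply]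
    ring
  have hder : HasFDerivAt (diffusedDensity d p0 m σ) (∫ y, jointGrad d p0 m σ x y) x := by
    refine hasFDerivAt_integral_of_dominated_of_fderiv_le (𝕜 := ℝ)
      (F := fun x y => condDens d m σ x y * p0 y) (F' := jointGrad d p0 m σ)
      (s := Metric.ball x 1) (Metric.ball_mem_nhds x one_pos)
      (Filter.Eventually.of_forall fun x => (integrable_slice d hint m σ x).aestronglyMeasurable)
      (integrable_slice d hint m σ x) hmg
      (ae_of_all _ fun y x' hx' => norm_jointGrad_le (B := ‖x‖ + 1) d hnonneg hR hm x' y ?_)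
      (hint.const_mul _) (ae_of_all _ fun y x' _ => hasFDerivAt_condDens d p0 m hσ x' y)
    have h1 : ‖x' - x‖ < 1 := by simpa [dist_eq_norm] using hx'
    have := norm_le_norm_add_norm_sub' x' x
    linarith
  have hpos := diffusedDensity_pos d hnonneg hprob m hσ x
  constructor
  · have := (hgi.apply_continuousLinearMap (Pi.single i 1)).neg
    simpa [happ] using this
  · unfold score
    rw [(hder.log hpos.ne').fderiv, smul_apply,
      ContinuousLinearMap.integral_apply hgi]
    simp only [happ, integral_neg, smul_eq_mul]
    field_simp

/-- Compact support of `p0` gives the score linear growth. -/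
lemma abs_score_le (d : ℕ) {p0 : (Fin d → ℝ) → ℝ}
    (hnonneg : ∀ y, 0 ≤ p0 y) (hprob : (∫ y : Fin d → ℝ, p0 y) = 1) {R : ℝ}
    (hR : ∀ y : Fin d → ℝ, p0 y ≠ 0 → ∀ i, |y i| ≤ R) {m σ : ℝ} (hm : 0 < m) (hσ : 0 < σ)
    (x : Fin d → ℝ) (i : Fin d) :
    |score d (diffusedDensity d p0 m σ) x i| ≤ (|x i| + m * R) / σ ^ 2 := by
  obtain ⟨hi, he⟩ := score_mul_density d hnonneg hprob hR hm hσ x i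
  have hpos := diffusedDensity_pos d hnonneg hprob m hσ x
  have hint := integrable_of_integral_eq_one hprob
  refine le_of_mul_le_mul_right ?_ hpos
  rw [← abs_of_pos hpos, ← abs_mul, he, abs_neg, abs_of_pos hpos]
  refine abs_integral_le_integral_abs.trans ?_
  change _ ≤ _ * ∫ y, condDens d m σ x y * p0 y
  rw [← integral_const_mul]
  refine integral_mono hi.abs ((integrable_slice d hint m σ x).const_mul _) fun y => ?_
  have hw : 0 ≤ condDens d m σ x y * p0 y := mul_nonneg (condDens_nonneg ..) (hnonneg y)
  by_cases hy : p0 y = 0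
  · simp [hy]
  simp only [abs_mul _ (condDens d m σ x y * p0 y), abs_of_nonneg hw]
  refine mul_le_mul_of_nonneg_right ?_ hw
  rw [abs_div, abs_of_pos (by positivity : 0 < σ ^ 2)]
  have := abs_sub_le_of_support hR hm hy x i
  gcongr

/-! ### The identity -/

/-- The iterated integral over `(X0, Z)` of a function of `(X0, X)`, as an integral against the
joint density of `(X0, X)`. -/
lemma iterated_eq_joint (d : ℕ) (p0 : (Fin d → ℝ) → ℝ) (m : ℝ) {σ : ℝ} (hσ : 0 < σ)
    (G : (Fin d → ℝ) × (Fin d → ℝ) → ℝ)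
    (hG : Integrable (fun q => G q * jointDens d p0 m σ q) (volume.prod volume)) :
    ∫ y : Fin d → ℝ, ∫ z : Fin d → ℝ, G (y, fun j => m * y j + σ * z j) * p0 y * gaussK d z
      = ∫ q, G q * jointDens d p0 m σ q ∂(volume.prod volume) := by
  rw [integral_prod _ hG]
  refine integral_congr_ae (ae_of_all _ fun y => ?_)
  refine (integral_gaussK_eq d m hσ (fun x => G (y, x) * p0 y) y).trans ?_
  refine integral_congr_ae (ae_of_all _ fun x => ?_)
  simp only [jointDens]
  ring

/-- the de-noising score-matching identity
`E‖s(X) − ∇log p(X)‖² = E‖s(X) + (X − m X0)/σ²‖² + E‖∇log p(X)‖² − E‖(X − m X0)/σ²‖²`,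
where the expectations are over `(X0, Z)` and `X = m X0 + σ Z`; in particular the difference
of the first two terms is a constant not depending on `s`. -/
theorem denoising_score_matching_identity
    (d : ℕ) (hd : 1 ≤ d)
    (p0 : (Fin d → ℝ) → ℝ) (hmeas : Measurable p0) (hnonneg : ∀ y, 0 ≤ p0 y)
    (hprob : (∫ y : Fin d → ℝ, p0 y) = 1)
    (hbdd : ∃ Mb : ℝ, ∀ y, p0 y ≤ Mb)
    (hsupp : ∃ R : ℝ, ∀ y : Fin d → ℝ, p0 y ≠ 0 → ∀ i, |y i| ≤ R)
    (m σ : ℝ) (hm : m ∈ Set.Ioo (0 : ℝ) 1) (hσ : σ = Real.sqrt (1 - m ^ 2))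
    (s : (Fin d → ℝ) → Fin d → ℝ) (hsmeas : Measurable s)
    (hL2 : Integrable (fun x : Fin d → ℝ =>
      (∑ i, (s x i) ^ 2) * diffusedDensity d p0 m σ x)) :
    (∫ y : Fin d → ℝ, ∫ z : Fin d → ℝ,
        (∑ i, (s (fun j => m * y j + σ * z j) i
              - score d (diffusedDensity d p0 m σ) (fun j => m * y j + σ * z j) i) ^ 2)
          * p0 y * gaussK d z)
      = (∫ y : Fin d → ℝ, ∫ z : Fin d → ℝ,
          (∑ i, (s (fun j => m * y j + σ * z j) i
                + ((m * y i + σ * z i) - m * y i) / σ ^ 2) ^ 2)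
            * p0 y * gaussK d z)
        + (∫ y : Fin d → ℝ, ∫ z : Fin d → ℝ,
            (∑ i, (score d (diffusedDensity d p0 m σ) (fun j => m * y j + σ * z j) i) ^ 2)
              * p0 y * gaussK d z)
        - (∫ y : Fin d → ℝ, ∫ z : Fin d → ℝ,
            (∑ i, (((m * y i + σ * z i) - m * y i) / σ ^ 2) ^ 2)
              * p0 y * gaussK d z) := by
  obtain ⟨R, hR⟩ := hsupp
  have hm0 : 0 < m := hm.1
  have hσ0 : 0 < σ := by
    rw [hσ]
    refine Real.sqrt_pos.2 ?_
    nlinarith [hm.1, hm.2]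
  clear hσ
  have hint := integrable_of_integral_eq_one hprob
  set p := diffusedDensity d p0 m σ with hp
  have hpi : ∀ x, p x = ∫ y, jointDens d p0 m σ (y, x) := fun _ => rfl
  set w := jointDens d p0 m σ with hw
  have hw0 : ∀ q, 0 ≤ w q := fun q => mul_nonneg (condDens_nonneg ..) (hnonneg _)
  have hwm : Measurable w := measurable_jointDens d hmeas m σ
  let a : Fin d → (Fin d → ℝ) × (Fin d → ℝ) → ℝ := fun i q => s q.2 i
  let b : Fin d → (Fin d → ℝ) × (Fin d → ℝ) → ℝ := fun i q => score d p q.2 i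
  let e : Fin d → (Fin d → ℝ) × (Fin d → ℝ) → ℝ := fun i q => (q.2 i - m * q.1 i) / σ ^ 2
  have ham : ∀ i, Measurable (a i) := fun i =>
    (measurable_pi_apply i).comp (hsmeas.comp measurable_snd)
  have hbm : ∀ i, Measurable (b i) := fun i =>
    (measurable_fderiv_apply_const ℝ (fun z => Real.log (p z)) (Pi.single i (1 : ℝ))).comp
      measurable_snd
  have hem : ∀ i, Measurable (e i) := fun i => by fun_prop
  have hwi : Integrable w (volume.prod volume) := by
    simpa using integrable_noise d hmeas hnonneg hint m hσ0 (fun _ => 1) measurable_const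
      (fun _ => zero_le_one) (by simpa using integrable_gaussK d)
  have he2 : ∀ i, Integrable (fun q => (e i q) ^ 2 * w q) (volume.prod volume) := by
    intro i
    have := (integrable_noise d hmeas hnonneg hint m hσ0 (fun z => (z i) ^ 2) (by fun_prop)
      (fun _ => sq_nonneg _) (integrable_sq_mul_gaussK d i)).const_mul (1 / σ ^ 2)
    refine this.congr (ae_of_all _ fun q => ?_)
    simp only [e]
    field_simp
    rfl
  have ha2 : ∀ i, Integrable (fun q => (a i q) ^ 2 * w q) (volume.prod volume) := by
    intro i
    refine (integrable_prod_iff' (((ham i).pow_const 2).mul hwm).aestronglyMeasurable).2 ⟨?_, ?_⟩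
    · exact ae_of_all _ fun x => (integrable_slice d hint m σ x).const_mul ((s x i) ^ 2)
    · have h1 : ∀ x, ∫ y, ‖(a i (y, x)) ^ 2 * w (y, x)‖ = (s x i) ^ 2 * p x := by
        intro x
        rw [hpi, ← integral_const_mul]
        refine integral_congr_ae (ae_of_all _ fun y => ?_)
        exact Real.norm_of_nonneg (mul_nonneg (sq_nonneg _) (hw0 _))
      have hpm : AEStronglyMeasurable p volume := by
        have := (hwi.swap).integral_prod_left
        exact this.aestronglyMeasurable
      refine Integrable.congr (f := fun x => (s x i) ^ 2 * p x) ?_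
        (ae_of_all _ fun x => (h1 x).symm)
      refine hL2.mono' ((((measurable_pi_apply i).comp hsmeas).pow_const
        2).aestronglyMeasurable.mul hpm) (ae_of_all _ fun x => ?_)
      have hp0 : 0 ≤ p x := (diffusedDensity_pos d hnonneg hprob m hσ0 x).le
      rw [Real.norm_of_nonneg (mul_nonneg (sq_nonneg _) hp0)]
      refine mul_le_mul_of_nonneg_right ?_ hp0
      exact Finset.single_le_sum (f := fun i => (s x i) ^ 2) (fun j _ => sq_nonneg _)
        (Finset.mem_univ i)
  -- On the support of `p0` the bound on the score reads `|∂ᵢ log p| ≤ |eᵢ| + 2 m R / σ²`.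
  have hb2 : ∀ i, Integrable (fun q => (b i q) ^ 2 * w q) (volume.prod volume) := by
    intro i
    refine (((he2 i).const_mul 2).add (hwi.const_mul (2 * (2 * m * R / σ ^ 2) ^ 2))).mono'
      (((hbm i).pow_const 2).mul hwm).aestronglyMeasurable (ae_of_all _ fun q => ?_)
    rw [Real.norm_of_nonneg (mul_nonneg (sq_nonneg _) (hw0 q))]
    simp only [Pi.add_apply]
    rw [← mul_assoc, ← add_mul]
    by_cases hy : p0 q.1 = 0
    · simp [hw, jointDens, hy]
    refine mul_le_mul_of_nonneg_right ?_ (hw0 q)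
    have h1 : |b i q| ≤ (|q.2 i| + m * R) / σ ^ 2 :=
      abs_score_le d hnonneg hprob hR hm0 hσ0 q.2 i
    have h2 : |q.2 i| ≤ |q.2 i - m * q.1 i| + m * R := by
      have h3 := hR _ hy i
      have h4 : |q.2 i| ≤ |q.2 i - m * q.1 i| + |m * q.1 i| := by
        simpa using abs_add_le (q.2 i - m * q.1 i) (m * q.1 i)
      rw [abs_mul, abs_of_pos hm0] at h4
      nlinarith
    have h5 : |b i q| ≤ |e i q| + 2 * m * R / σ ^ 2 := by
      refine h1.trans ?_
      simp only [e]
      rw [abs_div, abs_of_pos (by positivity : 0 < σ ^ 2), ← add_div]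
      exact div_le_div_of_nonneg_right (by linarith) (by positivity)
    rw [← sq_abs (b i q), ← sq_abs (e i q)]
    calc |b i q| ^ 2 ≤ (|e i q| + 2 * m * R / σ ^ 2) ^ 2 :=
          pow_le_pow_left₀ (abs_nonneg _) h5 2
      _ ≤ _ := by nlinarith [sq_nonneg (|e i q| - 2 * m * R / σ ^ 2)]
  have hab : ∀ i, Integrable (fun q => a i q * b i q * w q) (volume.prod volume) := fun i =>
    integrable_mul_weight (ham i) (hbm i) hwm hw0 (ha2 i) (hb2 i)
  have hae : ∀ i, Integrable (fun q => a i q * e i q * w q) (volume.prod volume) := fun i =>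
    integrable_mul_weight (ham i) (hem i) hwm hw0 (ha2 i) (he2 i)
  have hcr : ∀ i, Integrable (fun q => a i q * (b i q + e i q) * w q) (volume.prod volume) :=
    fun i => ((hab i).add (hae i)).congr (ae_of_all _ fun q => by simp only [Pi.add_apply]; ring)
  -- Integrating over `y` first, the cross term vanishes because the score is the conditional
  -- expectation of `-eᵢ` given `X = x`.
  have hzero : ∀ i, ∫ q, a i q * (b i q + e i q) * w q ∂(volume.prod volume) = 0 := by
    intro i
    rw [integral_prod_symm _ (hcr i)]
    refine integral_eq_zero_of_ae (ae_of_all _ fun x => ?_)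
    obtain ⟨h1, h2⟩ := score_mul_density d hnonneg hprob hR hm0 hσ0 x i
    have h3 : ∀ y, a i (y, x) * (b i (y, x) + e i (y, x)) * w (y, x)
        = s x i * (score d p x i * (condDens d m σ x y * p0 y)
          + (x i - m * y i) / σ ^ 2 * (condDens d m σ x y * p0 y)) := by
      intro y
      simp only [a, b, e, hw, jointDens]
      ring
    simp only [h3]
    rw [integral_const_mul, integral_add ((integrable_slice d hint m σ x).const_mul _) h1,
      integral_const_mul]
    have h4 : score d p x i * (∫ y, condDens d m σ x y * p0 y) = _ := h2
    rw [h4]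
    simp
  have hB : Integrable (fun q => (∑ i, (b i q) ^ 2) * w q) (volume.prod volume) := by
    simp only [Finset.sum_mul]
    exact integrable_finsetSum _ fun i _ => hb2 i
  have hE : Integrable (fun q => (∑ i, (e i q) ^ 2) * w q) (volume.prod volume) := by
    simp only [Finset.sum_mul]
    exact integrable_finsetSum _ fun i _ => he2 i
  have hAE : Integrable (fun q => (∑ i, (a i q + e i q) ^ 2) * w q) (volume.prod volume) := by
    simp only [Finset.sum_mul]
    refine integrable_finsetSum _ fun i _ => ?_
    refine (((ha2 i).add ((hae i).const_mul 2)).add (he2 i)).congr (ae_of_all _ fun q => ?_)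
    simp only [Pi.add_apply]
    ring
  have hC : Integrable (fun q => ∑ i, a i q * (b i q + e i q) * w q) (volume.prod volume) :=
    integrable_finsetSum _ fun i _ => hcr i
  have hpt : ∀ q, (∑ i, (a i q - b i q) ^ 2) * w q
      = (∑ i, (a i q + e i q) ^ 2) * w q + (∑ i, (b i q) ^ 2) * w q - (∑ i, (e i q) ^ 2) * w q
        - 2 * ∑ i, a i q * (b i q + e i q) * w q := by
    intro q
    simp only [Finset.sum_mul, Finset.mul_sum, ← Finset.sum_add_distrib,
      ← Finset.sum_sub_distrib]
    exact Finset.sum_congr rfl fun i _ => by ring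
  have hAB : Integrable (fun q => (∑ i, (a i q - b i q) ^ 2) * w q) (volume.prod volume) := by
    simp only [hpt]
    exact ((hAE.add hB).sub hE).sub (hC.const_mul 2)
  have key : ∫ q, (∑ i, (a i q - b i q) ^ 2) * w q ∂(volume.prod volume)
      = ∫ q, (∑ i, (a i q + e i q) ^ 2) * w q ∂(volume.prod volume)
        + ∫ q, (∑ i, (b i q) ^ 2) * w q ∂(volume.prod volume)
        - ∫ q, (∑ i, (e i q) ^ 2) * w q ∂(volume.prod volume) := by
    simp only [hpt]
    rw [integral_sub (by exact (hAE.add hB).sub hE) (hC.const_mul 2),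
      integral_sub (by exact hAE.add hB) hE, integral_add hAE hB, integral_const_mul,
      integral_finsetSum _ fun i _ => hcr i]
    simp [hzero]
  rw [← iterated_eq_joint d p0 m hσ0 _ hAB, ← iterated_eq_joint d p0 m hσ0 _ hAE,
    ← iterated_eq_joint d p0 m hσ0 _ hB, ← iterated_eq_joint d p0 m hσ0 _ hE] at key
  exact key
end

section
/- There exists a constant c > 0 depending only on (d, M) such that for every subset B ⊆ S, every integer ℓ ≥ 1, every multi-index α with |α| = ℓ, and every x ∈ ℝ^d, the partial derivative ∂^α p_B(x) exists and satisfies |∂^α p_B(x)| ≤ c · (c · ℓ⁴)^ℓ · σ^{−ℓ}. -/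
/-!
Substituting `z = x / σ + y` turns `smoothedProd` into `u ↦ ∫ G z · exp (-‖z - u‖² / 2) dz`
evaluated at `u = x / σ`, where `G` is bounded and measurable (`smoothedProd_eq`). All derivatives
thus fall on the Gaussian, and each of them costs a factor `σ⁻¹`.

The family `gaussConv G β` of convolutions of `G` with `y ^ β exp (-‖y‖² / 2)` is closed under
differentiation: `∂_i (gaussConv G β) = gaussConv G (β + e_i) - β_i gaussConv G (β - e_i)`
(`hasFDerivAt_gaussConv`), so every member is smooth. Moreover `|t| ^ n ≤ n! e^{|t|}` gives
`|gaussConv G β| ≤ C · |β|!` (`abs_gaussConv_le`). Counting the terms produced by `ℓ`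
differentiations starting at `β = 0` bounds the `ℓ`-th derivatives by `C · ℓ! · ℓ ^ ℓ`
(`abs_iteratedFDeriv_gaussConv_le`), hence by `C · (ℓ²) ^ ℓ`, which is stronger than required.
-/

open MeasureTheory Finset

/-- The Gaussian-smoothed product `p_B(x) = ∫ ∏_{(i,j)∈B} f_{i,j}((x_i+σy_i)/m,(x_j+σy_j)/m) K(y) dy`. -/
noncomputable def smoothedProd (d : ℕ) (f : Fin d → Fin d → ℝ → ℝ → ℝ)
    (m σ : ℝ) (B : Finset (Fin d × Fin d)) (x : Fin d → ℝ) : ℝ :=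
  ∫ y : Fin d → ℝ,
    (∏ e ∈ B, f e.1 e.2 ((x e.1 + σ * y e.1) / m) ((x e.2 + σ * y e.2) / m)) * gaussK d y

namespace SmoothedProd

/-- The one-dimensional Hermite-type building block `t ^ n * exp (-t² / 2)`. -/
noncomputable def wt (n : ℕ) (t : ℝ) : ℝ := t ^ n * Real.exp (-t ^ 2 / 2)

/-- The monomial `y ^ β` times the unnormalised Gaussian `exp (-‖y‖² / 2)`. -/
noncomputable def gaussMon {d : ℕ} (β : Fin d → ℕ) (y : Fin d → ℝ) : ℝ := ∏ i, wt (β i) (y i)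

/-- The majorant `∏ i, e² e^{-|y i|}` of all `gaussMon β`, up to the factor `|β|!`. -/
noncomputable def majorant {d : ℕ} (y : Fin d → ℝ) : ℝ :=
  ∏ i, (Real.exp 2 * Real.exp (-|y i|))

/-- Convolution of `G` with the reflected kernel: `u ↦ ∫ G z · gaussMon β (z - u) dz`. -/
noncomputable def gaussConv {d : ℕ} (G : (Fin d → ℝ) → ℝ) (β : Fin d → ℕ) (u : Fin d → ℝ) : ℝ :=
  ∫ z, G z * gaussMon β (z - u)

/-- The multi-index `β + e_i`. -/
def up {d : ℕ} (β : Fin d → ℕ) (i : Fin d) : Fin d → ℕ := Function.update β i (β i + 1)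

/-- The multi-index `β - e_i`; truncated to `β` when `β i = 0`, where it is only ever used with
the coefficient `β i = 0`. -/
def down {d : ℕ} (β : Fin d → ℕ) (i : Fin d) : Fin d → ℕ := Function.update β i (β i - 1)

/-- The differential at `y` of `u ↦ gaussMon β (y - u)` (at `u = 0`): by
`(t ^ n e^{-t²/2})' = n t ^ (n-1) e^{-t²/2} - t ^ (n+1) e^{-t²/2}`, it is again a combination of
functions `gaussMon`. -/
noncomputable def gaussMonD {d : ℕ} (β : Fin d → ℕ) (y : Fin d → ℝ) : (Fin d → ℝ) →L[ℝ] ℝ :=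
  ∑ i, (gaussMon (up β i) y - β i * gaussMon (down β i) y) •
    (ContinuousLinearMap.proj i : (Fin d → ℝ) →L[ℝ] ℝ)

/-! ### The Gaussian monomials: decay and differentiation -/

lemma sum_up {d : ℕ} (β : Fin d → ℕ) (i : Fin d) : ∑ j, up β i j = ∑ j, β j + 1 := by
  rw [up, Finset.sum_update_of_mem (mem_univ i), ← Finset.add_sum_erase _ _ (mem_univ i),
    Finset.sdiff_singleton_eq_erase]
  omega

lemma sum_down {d : ℕ} (β : Fin d → ℕ) (i : Fin d) (h : β i ≠ 0) :
    ∑ j, down β i j + 1 = ∑ j, β j := by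
  rw [down, Finset.sum_update_of_mem (mem_univ i), ← Finset.add_sum_erase _ _ (mem_univ i),
    Finset.sdiff_singleton_eq_erase]
  omega

lemma abs_wt_le (n : ℕ) (t : ℝ) :
    |wt n t| ≤ (n.factorial : ℝ) * (Real.exp 2 * Real.exp (-|t|)) := by
  have h1 : |t| ^ n ≤ n.factorial * Real.exp |t| := by
    have := Real.pow_div_factorial_le_exp |t| (abs_nonneg t) n
    rw [div_le_iff₀ (by positivity)] at this
    linarith
  -- completing the square: `|t| - t²/2 ≤ 2 - |t|`
  have h2 : Real.exp |t| * Real.exp (-t ^ 2 / 2) ≤ Real.exp 2 * Real.exp (-|t|) := by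
    rw [← Real.exp_add, ← Real.exp_add, Real.exp_le_exp]
    nlinarith [sq_nonneg (|t| - 2), sq_abs t]
  rw [wt, abs_mul, abs_pow, Real.abs_exp]
  calc |t| ^ n * Real.exp (-t ^ 2 / 2)
      ≤ n.factorial * Real.exp |t| * Real.exp (-t ^ 2 / 2) := by gcongr
    _ = n.factorial * (Real.exp |t| * Real.exp (-t ^ 2 / 2)) := by ring
    _ ≤ _ := by gcongr

lemma majorant_nonneg {d : ℕ} (y : Fin d → ℝ) : 0 ≤ majorant y := by
  unfold majorant; positivity

lemma abs_gaussMon_le {d : ℕ} (β : Fin d → ℕ) (y : Fin d → ℝ) :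
    |gaussMon β y| ≤ ((∑ i, β i).factorial : ℝ) * majorant y := by
  rw [gaussMon, Finset.abs_prod]
  calc ∏ i, |wt (β i) (y i)|
      ≤ ∏ i, (((β i).factorial : ℝ) * (Real.exp 2 * Real.exp (-|y i|))) :=
        Finset.prod_le_prod (fun _ _ => abs_nonneg _) (fun i _ => abs_wt_le _ _)
    _ = (∏ i, ((β i).factorial : ℝ)) * majorant y := by rw [Finset.prod_mul_distrib, majorant]
    _ ≤ _ := by
        gcongr
        · exact majorant_nonneg y
        · exact_mod_cast Nat.le_of_dvd (Nat.factorial_pos _)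
            (Nat.prod_factorial_dvd_factorial_sum _ _)

lemma majorant_shift {d : ℕ} (z u u₀ : Fin d → ℝ) (h : ‖u - u₀‖ ≤ 1) :
    majorant (z - u) ≤ Real.exp 1 ^ d * majorant (z - u₀) := by
  have : Real.exp 1 ^ d = ∏ _i : Fin d, Real.exp 1 := by simp
  rw [majorant, majorant, this, ← Finset.prod_mul_distrib]
  refine Finset.prod_le_prod (fun _ _ => by positivity) fun i _ => ?_
  rw [← Real.exp_add, ← Real.exp_add, ← Real.exp_add, Real.exp_le_exp]
  have h1 : |u i - u₀ i| ≤ 1 := (norm_le_pi_norm (u - u₀) i).trans h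
  have h2 : |z i - u₀ i| ≤ |z i - u i| + |u i - u₀ i| := abs_sub_le _ _ _
  simp only [Pi.sub_apply]
  linarith

lemma integrable_majorant (d : ℕ) : Integrable (majorant : (Fin d → ℝ) → ℝ) := by
  have h : Integrable (fun t : ℝ => Real.exp (-|t|)) := by
    by_contra hn
    have h0 := integral_undef hn
    rw [integral_comp_abs (f := fun t => Real.exp (-t)), integral_exp_neg_Ioi_zero] at h0
    norm_num at h0
  exact Integrable.fintype_prod (f := fun (_ : Fin d) (t : ℝ) => Real.exp 2 * Real.exp (-|t|))
    fun _ => h.const_mul _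

lemma hasDerivAt_wt (n : ℕ) (t : ℝ) :
    HasDerivAt (wt n) (n * wt (n - 1) t - wt (n + 1) t) t := by
  have h1 : HasDerivAt (fun t : ℝ => -t ^ 2 / 2) (-t) t := by
    refine (((hasDerivAt_pow 2 t).fun_neg).div_const 2).congr_deriv ?_
    norm_num
    linarith
  have h2 : HasDerivAt (wt n) _ t := (hasDerivAt_pow n t).fun_mul h1.exp
  refine h2.congr_deriv ?_
  rw [wt, wt]
  ring

lemma gaussMon_update {d : ℕ} (β : Fin d → ℕ) (i : Fin d) (k : ℕ) (y : Fin d → ℝ) :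
    gaussMon (Function.update β i k) y = (∏ j ∈ univ.erase i, wt (β j) (y j)) * wt k (y i) := by
  rw [gaussMon, ← Finset.mul_prod_erase _ _ (mem_univ i), mul_comm]
  congr 1
  · refine Finset.prod_congr rfl fun j hj => ?_
    rw [Function.update_of_ne (Finset.ne_of_mem_erase hj)]
  · simp

lemma hasFDerivAt_gaussMon {d : ℕ} (β : Fin d → ℕ) (y : Fin d → ℝ) :
    HasFDerivAt (gaussMon β) (-gaussMonD β y) y := by
  have h : ∀ i ∈ (univ : Finset (Fin d)), HasFDerivAt (fun y : Fin d → ℝ => wt (β i) (y i))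
      (((β i : ℝ) * wt (β i - 1) (y i) - wt (β i + 1) (y i)) •
        (ContinuousLinearMap.proj i : (Fin d → ℝ) →L[ℝ] ℝ)) y := fun i _ =>
    HasDerivAt.comp_hasFDerivAt (f := fun y : Fin d → ℝ => y i) y (hasDerivAt_wt (β i) (y i))
      (ContinuousLinearMap.proj i : (Fin d → ℝ) →L[ℝ] ℝ).hasFDerivAt
  have := HasFDerivAt.finsetProd h
  refine this.congr_fderiv ?_
  rw [gaussMonD, ← Finset.sum_neg_distrib]
  refine Finset.sum_congr rfl fun i _ => ?_
  rw [up, down, gaussMon_update, gaussMon_update]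
  ext v
  simp only [smul_apply, neg_apply, smul_eq_mul]
  ring

lemma continuous_gaussMon {d : ℕ} (β : Fin d → ℕ) : Continuous (gaussMon β) :=
  continuous_iff_continuousAt.2 fun y => (hasFDerivAt_gaussMon β y).continuousAt

lemma continuous_gaussMonD {d : ℕ} (β : Fin d → ℕ) : Continuous (gaussMonD β) := by
  unfold gaussMonD
  have := @continuous_gaussMon d
  fun_prop

lemma hasFDerivAt_gaussMon_sub {d : ℕ} (β : Fin d → ℕ) (z u : Fin d → ℝ) :
    HasFDerivAt (fun u => gaussMon β (z - u)) (gaussMonD β (z - u)) u := by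
  have := (hasFDerivAt_gaussMon β (z - u)).comp u ((hasFDerivAt_id u).const_sub z)
  refine this.congr_fderiv ?_
  ext v
  simp

lemma norm_gaussMonD_le {d : ℕ} (β : Fin d → ℕ) :
    ∃ C : ℝ, ∀ y, ‖gaussMonD β y‖ ≤ C * majorant y := by
  refine ⟨∑ i, (((∑ j, up β i j).factorial : ℝ) + β i * ((∑ j, down β i j).factorial : ℝ)),
    fun y => ?_⟩
  rw [Finset.sum_mul]
  refine norm_sum_le_of_le _ fun i _ => ?_
  have hp : ‖(ContinuousLinearMap.proj i : (Fin d → ℝ) →L[ℝ] ℝ)‖ ≤ 1 :=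
    ContinuousLinearMap.opNorm_le_bound _ zero_le_one fun v => by
      simpa using norm_le_pi_norm v i
  rw [norm_smul]
  refine (mul_le_of_le_one_right (norm_nonneg _) hp).trans ?_
  have h1 := abs_gaussMon_le (up β i) y
  have h2 := abs_gaussMon_le (down β i) y
  have h3 : (β i : ℝ) * |gaussMon (down β i) y| ≤
      β i * (((∑ j, down β i j).factorial : ℝ) * majorant y) := by gcongr
  have h4 := abs_sub (gaussMon (up β i) y) (β i * gaussMon (down β i) y)
  rw [abs_mul, Nat.abs_cast] at h4
  rw [Real.norm_eq_abs]
  linarith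

/-! ### Smoothness and derivative bounds of the convolution -/

section Conv

variable {d : ℕ} {G : (Fin d → ℝ) → ℝ} {A : ℝ}

lemma integrable_majorant_sub (u : Fin d → ℝ) :
    Integrable (fun z : Fin d → ℝ => majorant (z - u)) :=
  (integrable_majorant d).comp_sub_right u

lemma integrable_conv (hG : Measurable G) (hA : ∀ z, |G z| ≤ A) (β : Fin d → ℕ)
    (u : Fin d → ℝ) : Integrable (fun z => G z * gaussMon β (z - u)) := by
  have hA0 : 0 ≤ A := (abs_nonneg _).trans (hA 0)
  refine ((integrable_majorant_sub u).const_mul (A * ((∑ i, β i).factorial : ℝ))).mono'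
    (hG.mul ((continuous_gaussMon β).comp (continuous_sub_right u)).measurable).aestronglyMeasurable
    (ae_of_all _ fun z => ?_)
  rw [norm_mul, mul_assoc]
  exact mul_le_mul (hA z) (abs_gaussMon_le β _) (abs_nonneg _) hA0

lemma abs_gaussConv_le (hA : ∀ z, |G z| ≤ A) (β : Fin d → ℕ) (u : Fin d → ℝ) :
    |gaussConv G β u| ≤ A * (∫ z : Fin d → ℝ, majorant z) * ((∑ i, β i).factorial : ℝ) := by
  have hA0 : 0 ≤ A := (abs_nonneg _).trans (hA 0)
  calc |gaussConv G β u|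
      ≤ ∫ z, A * ((∑ i, β i).factorial : ℝ) * majorant (z - u) := by
        rw [← Real.norm_eq_abs]
        refine norm_integral_le_of_norm_le ((integrable_majorant_sub u).const_mul _)
          (ae_of_all _ fun z => ?_)
        rw [norm_mul, mul_assoc]
        exact mul_le_mul (hA z) (abs_gaussMon_le β _) (abs_nonneg _) hA0
    _ = _ := by
        rw [integral_const_mul, integral_sub_right_eq_self (fun z : Fin d → ℝ => majorant z) u]
        ring

/-- Differentiation under the integral sign, dominated on the unit ball around `u`. -/
lemma hasFDerivAt_gaussConv (hG : Measurable G) (hA : ∀ z, |G z| ≤ A) (β : Fin d → ℕ)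
    (u : Fin d → ℝ) :
    HasFDerivAt (gaussConv G β)
      (∑ i, (gaussConv G (up β i) u - β i * gaussConv G (down β i) u) •
        (ContinuousLinearMap.proj i : (Fin d → ℝ) →L[ℝ] ℝ)) u := by
  have hA0 : 0 ≤ A := (abs_nonneg _).trans (hA 0)
  obtain ⟨C, hC⟩ := norm_gaussMonD_le β
  have key := hasFDerivAt_integral_of_dominated_of_fderiv_le (𝕜 := ℝ)
    (μ := (volume : Measure (Fin d → ℝ)))
    (F := fun u z => G z * gaussMon β (z - u)) (F' := fun u z => G z • gaussMonD β (z - u))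
    (x₀ := u) (bound := fun z => A * (|C| * (Real.exp 1 ^ d * majorant (z - u))))
    (Metric.closedBall_mem_nhds u one_pos)
    (Filter.Eventually.of_forall fun v => (integrable_conv hG hA β v).aestronglyMeasurable)
    (integrable_conv hG hA β u)
    (hG.aestronglyMeasurable.smul
      ((continuous_gaussMonD β).comp (continuous_sub_right u)).aestronglyMeasurable)
    (ae_of_all _ fun z v hv => ?_)
    ((((integrable_majorant_sub u).const_mul _).const_mul _).const_mul _)
    (ae_of_all _ fun z v _ => (hasFDerivAt_gaussMon_sub β z v).const_mul (G z))
  · refine key.congr_fderiv ?_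
    have hi : ∀ i : Fin d, Integrable (fun z => (G z * gaussMon (up β i) (z - u) -
        β i * (G z * gaussMon (down β i) (z - u)))) := fun i =>
      (integrable_conv hG hA _ u).sub ((integrable_conv hG hA _ u).const_mul _)
    have he : (fun z => G z • gaussMonD β (z - u)) = fun z => ∑ i,
        (G z * gaussMon (up β i) (z - u) - β i * (G z * gaussMon (down β i) (z - u))) •
          (ContinuousLinearMap.proj i : (Fin d → ℝ) →L[ℝ] ℝ) := by
      funext z
      rw [gaussMonD, Finset.smul_sum]
      refine Finset.sum_congr rfl fun i _ => ?_
      rw [smul_smul]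
      congr 1
      ring
    rw [he, integral_finsetSum _ fun i _ => (hi i).smul_const _]
    refine Finset.sum_congr rfl fun i _ => ?_
    rw [integral_smul_const, integral_sub (integrable_conv hG hA _ u)
      ((integrable_conv hG hA _ u).const_mul _), integral_const_mul]
    rfl
  · rw [norm_smul]
    refine mul_le_mul (hA z) ?_ (norm_nonneg _) hA0
    calc ‖gaussMonD β (z - v)‖ ≤ C * majorant (z - v) := hC _
      _ ≤ |C| * majorant (z - v) :=
        mul_le_mul_of_nonneg_right (le_abs_self C) (majorant_nonneg _)
      _ ≤ _ := mul_le_mul_of_nonneg_left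
        (majorant_shift z v u (by simpa [dist_eq_norm] using hv)) (abs_nonneg C)

lemma contDiff_gaussConv_nat (hG : Measurable G) (hA : ∀ z, |G z| ≤ A) (n : ℕ) :
    ∀ β : Fin d → ℕ, ContDiff ℝ n (gaussConv G β) := by
  induction n with
  | zero =>
    intro β
    exact contDiff_zero.2 (continuous_iff_continuousAt.2 fun u =>
      (hasFDerivAt_gaussConv hG hA β u).continuousAt)
  | succ n ih =>
    intro β
    push_cast
    refine contDiff_succ_iff_hasFDerivAt.2 ⟨_, ?_, hasFDerivAt_gaussConv hG hA β⟩
    exact ContDiff.sum fun i _ =>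
      ((ih _).sub (contDiff_const.mul (ih _))).smul contDiff_const

lemma contDiff_gaussConv (hG : Measurable G) (hA : ∀ z, |G z| ≤ A) (β : Fin d → ℕ) :
    ContDiff ℝ (⊤ : ℕ∞) (gaussConv G β) :=
  contDiff_infty.2 fun n => contDiff_gaussConv_nat hG hA n β

/-- Each derivative replaces a monomial of degree `n` by at most `n + 1` monomials, counted with
coefficients, of degree at most `n + 1`. After `ℓ` steps there are at most `(n + ℓ) ^ ℓ` monomials
of degree at most `n + ℓ`, each contributing at most `(n + ℓ)!` times a constant. -/
lemma abs_iteratedFDeriv_gaussConv_le (hG : Measurable G) (hA : ∀ z, |G z| ≤ A) (ℓ : ℕ) :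
    ∀ (n : ℕ) (β : Fin d → ℕ), ∑ i, β i = n → ∀ (v : Fin ℓ → Fin d) (u : Fin d → ℝ),
      |iteratedFDeriv ℝ ℓ (gaussConv G β) u (fun j => Pi.single (v j) (1 : ℝ))| ≤
        A * (∫ z : Fin d → ℝ, majorant z) * ((n + ℓ).factorial : ℝ) * ((n + ℓ : ℕ) : ℝ) ^ ℓ := by
  have hA0 : 0 ≤ A := (abs_nonneg _).trans (hA 0)
  have hI0 : 0 ≤ ∫ z : Fin d → ℝ, majorant z := integral_nonneg majorant_nonneg
  induction ℓ with
  | zero =>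
    intro n β hβ v u
    subst hβ
    simpa using abs_gaussConv_le hA β u
  | succ ℓ ih =>
    intro n β hβ v u
    set i := v (Fin.last ℓ) with hi
    set w : Fin ℓ → Fin d := fun j => v j.castSucc with hw
    have hcd := contDiff_gaussConv_nat hG hA
    have hf : (fun y => fderiv ℝ (gaussConv G β) y (Pi.single i (1 : ℝ))) =
        fun y => gaussConv G (up β i) y - (β i : ℝ) • gaussConv G (down β i) y := by
      funext y
      rw [(hasFDerivAt_gaussConv hG hA β y).fderiv]
      simp [Pi.single_apply]
    have hstep : iteratedFDeriv ℝ (ℓ + 1) (gaussConv G β) u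
          (fun j => Pi.single (v j) (1 : ℝ)) =
        iteratedFDeriv ℝ ℓ (gaussConv G (up β i)) u (fun j => Pi.single (w j) (1 : ℝ)) -
        β i * iteratedFDeriv ℝ ℓ (gaussConv G (down β i)) u
          (fun j => Pi.single (w j) (1 : ℝ)) := by
      have hfd : ContDiff ℝ (ℓ : ℕ) (fderiv ℝ (gaussConv G β)) :=
        (hcd (ℓ + 1) β).fderiv_right (by norm_cast)
      rw [iteratedFDeriv_succ_apply_right,
        ← iteratedFDeriv_clm_apply_const_apply hfd le_rfl, hf,
        fun_iteratedFDeriv_sub_apply (hcd ℓ _).contDiffAt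
          ((hcd ℓ (down β i)).const_smul (β i : ℝ)).contDiffAt,
        iteratedFDeriv_const_smul_apply' (hcd ℓ _).contDiffAt]
      rfl
    set T : ℝ := A * (∫ z : Fin d → ℝ, majorant z) * ((n + (ℓ + 1)).factorial : ℝ) *
      ((n + (ℓ + 1) : ℕ) : ℝ) ^ ℓ with hT
    have hT0 : 0 ≤ T := by positivity
    have h1 : |iteratedFDeriv ℝ ℓ (gaussConv G (up β i)) u
        (fun j => Pi.single (w j) (1 : ℝ))| ≤ T := by
      have := ih (n + 1) (up β i) (by rw [sum_up, hβ]) w u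
      rwa [show n + 1 + ℓ = n + (ℓ + 1) by ring] at this
    have h2 : (β i : ℝ) * |iteratedFDeriv ℝ ℓ (gaussConv G (down β i)) u
        (fun j => Pi.single (w j) (1 : ℝ))| ≤ n * T := by
      rcases eq_or_ne (β i) 0 with h0 | h0
      · rw [h0]
        simpa using mul_nonneg (Nat.cast_nonneg n) hT0
      have hs := sum_down β i h0
      have hle : β i ≤ n := hβ ▸ Finset.single_le_sum (fun _ _ => Nat.zero_le _) (mem_univ i)
      have := ih (n - 1) (down β i) (by omega) w u
      refine mul_le_mul (by exact_mod_cast hle) (this.trans ?_) (abs_nonneg _) (Nat.cast_nonneg _)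
      rw [hT]
      have e1 : n - 1 + ℓ ≤ n + (ℓ + 1) := by omega
      gcongr
    rw [hstep]
    refine (abs_sub _ _).trans ?_
    rw [abs_mul, Nat.abs_cast]
    refine (add_le_add h1 h2).trans ?_
    have : T + n * T ≤ T * ((n + (ℓ + 1) : ℕ) : ℝ) := by
      push_cast
      nlinarith [mul_nonneg hT0 (Nat.cast_nonneg (α := ℝ) ℓ)]
    refine this.trans (le_of_eq ?_)
    rw [hT, pow_succ]
    ring

end Conv

/-! ### The smoothed product as a rescaled Gaussian convolution -/

/-- The bounded factor in `smoothedProd`, as a function of the rescaled variable `z = x / σ + y`,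
with the normalising constant of the Gaussian included. -/
noncomputable def prodFun (d : ℕ) (f : Fin d → Fin d → ℝ → ℝ → ℝ) (m σ : ℝ)
    (B : Finset (Fin d × Fin d)) (z : Fin d → ℝ) : ℝ :=
  (∏ e ∈ B, f e.1 e.2 (σ * z e.1 / m) (σ * z e.2 / m)) * (2 * Real.pi) ^ (-(d : ℝ) / 2)

lemma gaussK_eq (d : ℕ) (y : Fin d → ℝ) :
    gaussK d y = (2 * Real.pi) ^ (-(d : ℝ) / 2) * gaussMon 0 y := by
  rw [gaussK, gaussMon]
  congr 1
  simp only [wt, Pi.zero_apply, pow_zero, one_mul]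
  rw [← Real.exp_sum, ← Finset.sum_div, Finset.sum_neg_distrib]

lemma smoothedProd_eq (d : ℕ) (f : Fin d → Fin d → ℝ → ℝ → ℝ) (m σ : ℝ) (hσ : 0 < σ)
    (B : Finset (Fin d × Fin d)) :
    smoothedProd d f m σ B = fun x => gaussConv (prodFun d f m σ B) 0 (σ⁻¹ • x) := by
  funext x
  rw [gaussConv, ← integral_add_right_eq_self _ (σ⁻¹ • x), smoothedProd]
  congr 1
  funext y
  have h : ∀ i, σ * (y i + σ⁻¹ * x i) = x i + σ * y i := fun i => by
    field_simp
    ring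
  simp only [prodFun, add_sub_cancel_right, gaussK_eq, Pi.add_apply, Pi.smul_apply, smul_eq_mul, h]
  ring

lemma measurable_prodFun (d : ℕ) (f : Fin d → Fin d → ℝ → ℝ → ℝ) (m σ : ℝ)
    (B : Finset (Fin d × Fin d))
    (hf : ∀ e ∈ B, Measurable (Function.uncurry (f e.1 e.2))) :
    Measurable (prodFun d f m σ B) := by
  refine Measurable.mul_const (Finset.measurable_fun_prod _ fun e he => ?_) _
  exact (hf e he).comp (f := fun z : Fin d → ℝ => (σ * z e.1 / m, σ * z e.2 / m)) (by fun_prop)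

lemma abs_prodFun_le (d : ℕ) (f : Fin d → Fin d → ℝ → ℝ → ℝ) (m σ : ℝ)
    (B : Finset (Fin d × Fin d)) {M : ℝ} (hM : 1 ≤ M)
    (hf : ∀ e ∈ B, ∀ a b : ℝ, |f e.1 e.2 a b| ≤ M) (z : Fin d → ℝ) :
    |prodFun d f m σ B z| ≤ M ^ (d * d) * (2 * Real.pi) ^ (-(d : ℝ) / 2) := by
  have hpos : 0 ≤ (2 * Real.pi) ^ (-(d : ℝ) / 2) := by positivity
  rw [prodFun, abs_mul, abs_of_nonneg hpos, Finset.abs_prod]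
  refine mul_le_mul_of_nonneg_right ?_ hpos
  refine (Finset.prod_le_prod (fun _ _ => abs_nonneg _) fun e he => hf e he _ _).trans ?_
  rw [Finset.prod_const]
  refine pow_le_pow_right₀ hM ?_
  simpa using Finset.card_le_univ B

end SmoothedProd

open SmoothedProd

/-- there is `c > 0` depending only on `(d, M)` such that for every `B ⊆ S`,
every `ℓ ≥ 1`, every multi-index of order `ℓ` (encoded by `v : Fin ℓ → Fin d`) and every `x`,
the corresponding `ℓ`-th order partial derivative of `p_B` exists and is bounded by
`c (c ℓ^4)^ℓ σ^{-ℓ}`. -/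
theorem smoothedProd_derivative_bound
    (d : ℕ) (hd : 1 ≤ d) (M : ℝ) (hM : 1 ≤ M) :
    ∃ c : ℝ, 0 < c ∧
      ∀ (S : Finset (Fin d × Fin d)), (∀ e ∈ S, e.1 < e.2) →
      ∀ f : Fin d → Fin d → ℝ → ℝ → ℝ,
        (∀ e ∈ S, Measurable (Function.uncurry (f e.1 e.2))) →
        (∀ e ∈ S, ∀ a b : ℝ, |f e.1 e.2 a b| ≤ M) →
      ∀ m σ : ℝ, m ∈ Set.Ico (1 / 2 : ℝ) 1 → σ = Real.sqrt (1 - m ^ 2) →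
      ∀ B ∈ S.powerset,
        ContDiff ℝ (⊤ : ℕ∞) (smoothedProd d f m σ B) ∧
        ∀ ℓ : ℕ, 1 ≤ ℓ → ∀ (v : Fin ℓ → Fin d) (x : Fin d → ℝ),
          |iteratedFDeriv ℝ ℓ (smoothedProd d f m σ B) x (fun j => Pi.single (v j) (1 : ℝ))|
            ≤ c * (c * (ℓ : ℝ) ^ 4) ^ ℓ * (σ ^ ℓ)⁻¹ := by
  set A : ℝ := M ^ (d * d) * (2 * Real.pi) ^ (-(d : ℝ) / 2) with hAdef
  set I : ℝ := ∫ z : Fin d → ℝ, majorant z with hI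
  have hI0 : 0 ≤ I := integral_nonneg majorant_nonneg
  have hA0 : 0 ≤ A := by positivity
  refine ⟨A * I + 1, by positivity, ?_⟩
  intro S _ f hfm hfb m σ hm hσ B hB
  rw [Finset.mem_powerset] at hB
  have hσ0 : 0 < σ := by
    rw [hσ]
    exact Real.sqrt_pos.2 (by nlinarith [hm.1, hm.2])
  have hG := measurable_prodFun d f m σ B fun e he => hfm e (hB he)
  have hGA := abs_prodFun_le d f m σ B hM fun e he => hfb e (hB he)
  rw [smoothedProd_eq d f m σ hσ0 B]
  refine ⟨(contDiff_gaussConv hG hGA 0).comp (contDiff_id.const_smul σ⁻¹), ?_⟩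
  intro ℓ hℓ v x
  rw [iteratedFDeriv_comp_const_smul _ (contDiff_gaussConv_nat hG hGA ℓ 0)]
  have hb := abs_iteratedFDeriv_gaussConv_le hG hGA ℓ 0 0 (by simp) v (σ⁻¹ • x)
  rw [zero_add, ← hAdef, ← hI] at hb
  simp only [smul_apply, smul_eq_mul]
  rw [abs_mul, abs_of_nonneg (by positivity : 0 ≤ σ⁻¹ ^ ℓ), inv_pow, mul_comm]
  refine mul_le_mul_of_nonneg_right (hb.trans ?_) (by positivity)
  have hℓ1 : (1 : ℝ) ≤ ℓ := by exact_mod_cast hℓ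
  have hfac : (ℓ.factorial : ℝ) ≤ (ℓ : ℝ) ^ ℓ := by exact_mod_cast Nat.factorial_le_pow ℓ
  have hc1 : 1 ≤ A * I + 1 := by linarith [mul_nonneg hA0 hI0]
  calc A * I * (ℓ.factorial : ℝ) * (ℓ : ℝ) ^ ℓ
      ≤ (A * I + 1) * (ℓ : ℝ) ^ ℓ * (ℓ : ℝ) ^ ℓ := by
        gcongr
        linarith
    _ = (A * I + 1) * ((ℓ : ℝ) ^ 2) ^ ℓ := by ring
    _ ≤ (A * I + 1) * ((A * I + 1) * (ℓ : ℝ) ^ 4) ^ ℓ := by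
        gcongr
        calc (ℓ : ℝ) ^ 2 ≤ (ℓ : ℝ) ^ 4 := pow_le_pow_right₀ hℓ1 (by norm_num)
          _ ≤ _ := le_mul_of_one_le_left (by positivity) hc1
end

section
/- The density p of X = m X0 + σ Z is everywhere positive and smooth on ℝ^d, its score satisfies for every x ∈ ℝ^d the identity ∇ log p(x) = σ^{−2} ( m · g(x) − x ), where g(x) = ( ∫ y · (2πσ²)^{−d/2} exp(−‖x − m y‖²/(2σ²)) p0(y) dy ) / p(x) is the conditional mean of X0 given X = x, and consequently ‖∇ log p(x)‖ ≤ ( ‖x‖ + m√d ) / σ² for every x ∈ ℝ^d. -/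
/-!
The kernel `K x y = C exp (-‖x - m y‖² / (2σ²))` is bounded, and its `x`-gradient
`σ⁻² (m y - x) K x y` is bounded for `x` in a ball and `y` in the cube. Hence, for every integrable
weight `f` supported in the cube, `diffusedDensity d f m σ` may be differentiated under the integral
(`hasFDerivAt_diffusedDensity`), and its partial derivatives are
`σ⁻² (m P (y_i f) - x_i P f)`, where `P f` denotes the same transform of the weight `f`. Since
`y_i f` is again integrable and supported in the cube, this identity bootstraps: by induction on `n`,
all transforms are `C^n` (`contDiff_diffusedDensity`).

The score formula is the derivative formula for `f = p0`, divided by `p`. The conditional mean `g`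
has coordinates in `[-1, 1]`, so `‖g‖ ≤ √d`, and the bound is the triangle inequality.
-/

open MeasureTheory Finset

/-- Integrability of the Gaussian-weighted integrand, the kernel being bounded by its constant. -/
lemma integrable_kernel_mul {d : ℕ} {f : (Fin d → ℝ) → ℝ} (hf : Integrable f) (m σ : ℝ)
    (x : Fin d → ℝ) :
    Integrable (fun y : Fin d → ℝ => (2 * Real.pi * σ ^ 2) ^ (-(d : ℝ) / 2) *
      Real.exp (-(∑ i, (x i - m * y i) ^ 2) / (2 * σ ^ 2)) * f y) := by
  refine hf.bdd_mul (c := (2 * Real.pi * σ ^ 2) ^ (-(d : ℝ) / 2)) ?_ ?_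
  · exact Continuous.aestronglyMeasurable (by fun_prop)
  · refine Filter.Eventually.of_forall fun y => ?_
    have hC : 0 ≤ (2 * Real.pi * σ ^ 2) ^ (-(d : ℝ) / 2) := by positivity
    rw [Real.norm_of_nonneg (by positivity)]
    refine mul_le_of_le_one_right hC (Real.exp_le_one_iff.2 ?_)
    have : 0 ≤ (∑ i, (x i - m * y i) ^ 2) / (2 * σ ^ 2) := by positivity
    rw [neg_div]; linarith

lemma integrable_coord_mul {d : ℕ} {f : (Fin d → ℝ) → ℝ} (hf : Integrable f)
    (hsupp : ∀ y, f y ≠ 0 → ∀ i, |y i| ≤ 1) (i : Fin d) :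
    Integrable (fun y : Fin d → ℝ => y i * f y) := by
  refine hf.mono ?_ (Filter.Eventually.of_forall fun y => ?_)
  · exact (Continuous.aestronglyMeasurable (by fun_prop)).mul hf.aestronglyMeasurable
  · rw [norm_mul]
    by_cases h : f y = 0
    · simp [h]
    · exact mul_le_of_le_one_left (norm_nonneg _) (hsupp y h i)

/-- Differentiation under the integral sign. The derivative is again expressed by transforms of
weights supported in the cube, which is what makes the induction for smoothness work. -/
lemma hasFDerivAt_diffusedDensity {d : ℕ} {f : (Fin d → ℝ) → ℝ} (hf : Integrable f)
    (hsupp : ∀ y, f y ≠ 0 → ∀ i, |y i| ≤ 1) (m σ : ℝ) (hσ : 0 < σ) (x₀ : Fin d → ℝ) :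
    HasFDerivAt (diffusedDensity d f m σ)
      (∑ i, ((σ ^ 2)⁻¹ * (m * diffusedDensity d (fun y => y i * f y) m σ x₀
        - x₀ i * diffusedDensity d f m σ x₀)) •
          (ContinuousLinearMap.proj i : (Fin d → ℝ) →L[ℝ] ℝ)) x₀ := by
  set C : ℝ := (2 * Real.pi * σ ^ 2) ^ (-(d : ℝ) / 2) with hCdef
  have hC : 0 ≤ C := by positivity
  set K : (Fin d → ℝ) → (Fin d → ℝ) → ℝ := fun x y =>
    C * Real.exp (-(∑ i, (x i - m * y i) ^ 2) / (2 * σ ^ 2)) with hK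
  have hK0 : ∀ x y, 0 ≤ K x y := fun x y => by simp only [hK]; positivity
  have hKC : ∀ x y, K x y ≤ C := fun x y => by
    refine mul_le_of_le_one_right hC (Real.exp_le_one_iff.2 ?_)
    have : 0 ≤ (∑ i, (x i - m * y i) ^ 2) / (2 * σ ^ 2) := by positivity
    rw [neg_div]; linarith
  let F' : (Fin d → ℝ) → (Fin d → ℝ) → ((Fin d → ℝ) →L[ℝ] ℝ) := fun x y =>
    ∑ i, ((σ ^ 2)⁻¹ * (m * (K x y * (y i * f y)) - x i * (K x y * f y))) •
      (ContinuousLinearMap.proj i : (Fin d → ℝ) →L[ℝ] ℝ)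
  have hI : ∀ x, Integrable (fun y => K x y * f y) := fun x => integrable_kernel_mul hf m σ x
  have hIi : ∀ x i, Integrable (fun y : Fin d → ℝ => K x y * (y i * f y)) := fun x i =>
    integrable_kernel_mul (integrable_coord_mul hf hsupp i) m σ x
  have hcoef : ∀ x i, Integrable (fun y : Fin d → ℝ =>
      (σ ^ 2)⁻¹ * (m * (K x y * (y i * f y)) - x i * (K x y * f y))) := fun x i =>
    (((hIi x i).const_mul m).sub ((hI x).const_mul (x i))).const_mul _
  have hint : ∫ y, F' x₀ y = ∑ i, ((σ ^ 2)⁻¹ * (m * diffusedDensity d (fun y => y i * f y) m σ x₀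
        - x₀ i * diffusedDensity d f m σ x₀)) •
          (ContinuousLinearMap.proj i : (Fin d → ℝ) →L[ℝ] ℝ) := by
    simp only [F']
    rw [integral_finsetSum _ fun i _ => (hcoef x₀ i).smul_const _]
    refine Finset.sum_congr rfl fun i _ => ?_
    rw [integral_smul_const, integral_const_mul,
      integral_sub ((hIi x₀ i).const_mul m) ((hI x₀).const_mul (x₀ i)),
      integral_const_mul, integral_const_mul]
    rfl
  have hF'meas : AEStronglyMeasurable (F' x₀) volume := by
    refine Finset.aestronglyMeasurable_fun_sum _ fun i _ => ?_
    exact (hcoef x₀ i).aestronglyMeasurable.smul_const _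
  rw [← hint]
  refine hasFDerivAt_integral_of_dominated_of_fderiv_le (s := Metric.ball x₀ 1)
    (F := fun x y => K x y * f y) (F' := F')
    (bound := fun y => (∑ i, (σ ^ 2)⁻¹ * (|m| + (|x₀ i| + 1)) * C *
      ‖(ContinuousLinearMap.proj i : (Fin d → ℝ) →L[ℝ] ℝ)‖) * |f y|)
    (Metric.ball_mem_nhds x₀ one_pos)
    (Filter.Eventually.of_forall fun x => (hI x).aestronglyMeasurable) (hI x₀) ?_ ?_ ?_ ?_
  · exact hF'meas
  · refine Filter.Eventually.of_forall fun y x hx => ?_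
    rw [Finset.sum_mul]
    refine (norm_sum_le _ _).trans (Finset.sum_le_sum fun i _ => ?_)
    rw [norm_smul, mul_right_comm _ _ |f y|]
    refine mul_le_mul_of_nonneg_right ?_
      (norm_nonneg (ContinuousLinearMap.proj i : (Fin d → ℝ) →L[ℝ] ℝ))
    have hxi : |x i| ≤ |x₀ i| + 1 := by
      have h1 : |x i - x₀ i| ≤ 1 :=
        ((norm_le_pi_norm (x - x₀) i).trans (mem_ball_iff_norm.1 hx).le)
      have h2 := abs_sub_abs_le_abs_sub (x i) (x₀ i)
      linarith
    have hyf : |y i| * |f y| ≤ |f y| := by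
      by_cases h : f y = 0
      · simp [h]
      · exact mul_le_of_le_one_left (abs_nonneg _) (hsupp y h i)
    have e : ‖(σ ^ 2)⁻¹ * (m * (K x y * (y i * f y)) - x i * (K x y * f y))‖ ≤
        (σ ^ 2)⁻¹ * (|m| * (C * |f y|) + (|x₀ i| + 1) * (C * |f y|)) := by
      rw [norm_mul, Real.norm_of_nonneg (by positivity : 0 ≤ (σ ^ 2)⁻¹)]
      refine mul_le_mul_of_nonneg_left ((norm_sub_le _ _).trans (add_le_add ?_ ?_))
        (by positivity)
      · simp only [norm_mul, Real.norm_eq_abs, abs_of_nonneg (hK0 x y)]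
        gcongr
        exact hKC x y
      · simp only [norm_mul, Real.norm_eq_abs, abs_of_nonneg (hK0 x y)]
        gcongr
        exact hKC x y
    exact e.trans (le_of_eq (by ring))
  · exact hf.abs.const_mul _
  · refine Filter.Eventually.of_forall fun y x _ => ?_
    have hcoord : ∀ i, HasFDerivAt (fun x : Fin d → ℝ => (x i - m * y i) ^ 2)
        ((2 * (x i - m * y i)) • (ContinuousLinearMap.proj i : (Fin d → ℝ) →L[ℝ] ℝ)) x := by
      intro i
      have h := (((ContinuousLinearMap.proj i :
        (Fin d → ℝ) →L[ℝ] ℝ).hasFDerivAt (x := x)).sub_const (m * y i)).pow 2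
      simpa using h
    have hsum := HasFDerivAt.fun_sum (u := Finset.univ) fun i _ => hcoord i
    have h := (((hsum.fun_neg.mul_const (2 * σ ^ 2)⁻¹).exp).const_mul C).mul_const (f y)
    simp only [← div_eq_mul_inv] at h
    refine h.congr_fderiv ?_
    ext v
    simp only [F', hK, _root_.smul_apply, _root_.sum_apply,
      _root_.neg_apply, ContinuousLinearMap.proj_apply, smul_eq_mul,
      ← Finset.sum_neg_distrib, Finset.mul_sum]
    refine Finset.sum_congr rfl fun i _ => ?_
    field_simp
    ring

lemma contDiff_diffusedDensity {d : ℕ} (m σ : ℝ) (hσ : 0 < σ) (n : ℕ) :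
    ∀ f : (Fin d → ℝ) → ℝ, Integrable f → (∀ y, f y ≠ 0 → ∀ i, |y i| ≤ 1) →
      ContDiff ℝ n (diffusedDensity d f m σ) := by
  induction n with
  | zero =>
    intro f hf hsupp
    exact contDiff_zero.2 <| continuous_iff_continuousAt.2 fun x =>
      (hasFDerivAt_diffusedDensity hf hsupp m σ hσ x).continuousAt
  | succ n ih =>
    intro f hf hsupp
    have hsupp' : ∀ i : Fin d, ∀ y : Fin d → ℝ, y i * f y ≠ 0 → ∀ j, |y j| ≤ 1 :=
      fun i y hy => hsupp y (right_ne_zero_of_mul hy)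
    refine (contDiff_succ_iff_hasFDerivAt (𝕜 := ℝ) (n := n)).2
      ⟨_, ?_, fun x => hasFDerivAt_diffusedDensity hf hsupp m σ hσ x⟩
    refine ContDiff.sum fun i _ => ContDiff.fun_smul (contDiff_const.mul ?_) contDiff_const
    exact (contDiff_const.mul (ih _ (integrable_coord_mul hf hsupp i) (hsupp' i))).sub
      ((contDiff_apply ℝ ℝ i).mul (ih f hf hsupp))

/-- the density `p` of `X = m X0 + σ Z` is everywhere positive and smooth, the
score satisfies `∇ log p(x) = σ^{-2}(m g(x) − x)` with `g` the conditional mean of `X0` given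
`X = x`, and consequently `‖∇ log p(x)‖ ≤ (‖x‖ + m √d)/σ²`. -/
theorem score_formula_and_bound
    (d : ℕ) (hd : 1 ≤ d)
    (p0 : (Fin d → ℝ) → ℝ) (hmeas : Measurable p0) (hnonneg : ∀ y, 0 ≤ p0 y)
    (hprob : (∫ y : Fin d → ℝ, p0 y) = 1)
    (hsupp : ∀ y : Fin d → ℝ, p0 y ≠ 0 → ∀ i, |y i| ≤ 1)
    (m σ : ℝ) (hm : m ∈ Set.Ioc (0 : ℝ) 1) (hσ : σ = Real.sqrt (1 - m ^ 2)) (hσpos : 0 < σ) :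
    (∀ x : Fin d → ℝ, 0 < diffusedDensity d p0 m σ x) ∧
    ContDiff ℝ (⊤ : ℕ∞) (diffusedDensity d p0 m σ) ∧
    (∀ (x : Fin d → ℝ) (i : Fin d),
      score d (diffusedDensity d p0 m σ) x i =
        (σ ^ 2)⁻¹ *
          (m * ((∫ y : Fin d → ℝ,
                  y i * ((2 * Real.pi * σ ^ 2) ^ (-(d : ℝ) / 2) *
                    Real.exp (-(∑ j, (x j - m * y j) ^ 2) / (2 * σ ^ 2)) * p0 y)) /
                diffusedDensity d p0 m σ x)
            - x i)) ∧
    (∀ x : Fin d → ℝ,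
      Real.sqrt (∑ i, (score d (diffusedDensity d p0 m σ) x i) ^ 2) ≤
        (Real.sqrt (∑ i, (x i) ^ 2) + m * Real.sqrt d) / σ ^ 2) := by
  -- A non-integrable `p0` would have Bochner integral `0`.
  have hint : Integrable p0 := by
    by_contra h
    rw [integral_undef h] at hprob
    exact zero_ne_one hprob
  have hker : ∀ x y : Fin d → ℝ, 0 < (2 * Real.pi * σ ^ 2) ^ (-(d : ℝ) / 2) *
      Real.exp (-(∑ i, (x i - m * y i) ^ 2) / (2 * σ ^ 2)) := fun x y => by positivity
  have hpos : ∀ x : Fin d → ℝ, 0 < diffusedDensity d p0 m σ x := by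
    intro x
    have h0 : 0 < ∫ y : Fin d → ℝ, p0 y := by rw [hprob]; exact one_pos
    rw [integral_pos_iff_support_of_nonneg hnonneg hint] at h0
    unfold diffusedDensity
    rw [integral_pos_iff_support_of_nonneg (fun y => mul_nonneg (hker x y).le (hnonneg y))
      (integrable_kernel_mul hint m σ x)]
    convert h0 using 2
    ext y
    simp only [Function.mem_support, ne_eq, mul_eq_zero, (hker x y).ne', false_or]
  have hscore : ∀ (x : Fin d → ℝ) (i : Fin d),
      score d (diffusedDensity d p0 m σ) x i =
        (σ ^ 2)⁻¹ * (m * (diffusedDensity d (fun y => y i * p0 y) m σ x /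
          diffusedDensity d p0 m σ x) - x i) := by
    intro x i
    have h := (hasFDerivAt_diffusedDensity hint hsupp m σ hσpos x).log (hpos x).ne'
    have hp := (hpos x).ne'
    unfold score
    rw [h.fderiv]
    simp only [_root_.smul_apply, _root_.sum_apply,
      ContinuousLinearMap.proj_apply, smul_eq_mul, Pi.single_apply, mul_ite, mul_one, mul_zero,
      Finset.sum_ite_eq', Finset.mem_univ, if_true]
    field_simp
  refine ⟨hpos, contDiff_infty.2 fun n => contDiff_diffusedDensity m σ hσpos n p0 hint hsupp,
    ?_, ?_⟩
  · intro x i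
    rw [hscore x i]
    congr 4
    exact integral_congr_ae (Filter.Eventually.of_forall fun y => by ring)
  · intro x
    set g : Fin d → ℝ := fun i => diffusedDensity d (fun y => y i * p0 y) m σ x /
          diffusedDensity d p0 m σ x with hg
    have hg1 : ∀ i, g i ^ 2 ≤ 1 := by
      intro i
      rw [sq_le_one_iff_abs_le_one]
      simp only [hg]
      rw [abs_div, abs_of_pos (hpos x), div_le_one (hpos x)]
      refine (norm_integral_le_integral_norm (μ := volume) _).trans
        (integral_mono_of_nonneg (Filter.Eventually.of_forall fun y => norm_nonneg (_ : ℝ))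
          (integrable_kernel_mul hint m σ x) (Filter.Eventually.of_forall fun y => ?_))
      simp only [norm_mul (_ * _ : ℝ), Real.norm_of_nonneg (hker x y).le]
      refine mul_le_mul_of_nonneg_left ?_ (hker x y).le
      by_cases h : p0 y = 0
      · simp [h]
      · rw [norm_mul, Real.norm_of_nonneg (hnonneg y)]
        exact mul_le_of_le_one_left (hnonneg y) (hsupp y h i)
    have hgd : Real.sqrt (∑ i, g i ^ 2) ≤ Real.sqrt d :=
      Real.sqrt_le_sqrt ((Finset.sum_le_sum fun i _ => hg1 i).trans (by simp))
    have htri : Real.sqrt (∑ i, (m * g i - x i) ^ 2) ≤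
        m * Real.sqrt (∑ i, g i ^ 2) + Real.sqrt (∑ i, x i ^ 2) := by
      have h := norm_sub_le (m • WithLp.toLp 2 g) (WithLp.toLp 2 x)
      rw [norm_smul, Real.norm_of_nonneg hm.1.le] at h
      simpa [EuclideanSpace.norm_eq] using h
    have hs : Real.sqrt (∑ i, (score d (diffusedDensity d p0 m σ) x i) ^ 2) =
        (σ ^ 2)⁻¹ * Real.sqrt (∑ i, (m * g i - x i) ^ 2) := by
      simp only [hscore, mul_pow ((σ ^ 2)⁻¹), ← Finset.mul_sum]
      rw [Real.sqrt_mul (by positivity), Real.sqrt_sq (by positivity)]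
    rw [hs, div_eq_inv_mul]
    refine mul_le_mul_of_nonneg_left ?_ (by positivity)
    have := mul_le_mul_of_nonneg_left hgd hm.1.le
    linarith
end

section
/- For every subset A ⊆ S and every x ∈ ℝ^d, Δ_A(x) = σ̃^{|A|} · Σ_{C ⊆ B ⊆ A} [ ∏_{(i,j)∈B∖C} ∂₂f_{i,j}(x̃_i, x̃_j) ] · [ ∏_{(i,j)∈A∖B} ∂₁f_{i,j}(x̃_i, x̃_j) ] · ∫_{ℝ^d} ∏_{(i,j)∈C} Δ^{(1)}_{i,j}(x_i, x_j, y_i, y_j) · ∏_{(i,j)∈A∖B} y_i · ∏_{(i,j)∈B∖C} y_j · K(y) dy, where the sum ranges over all nested pairs of subsets C ⊆ B ⊆ A. -/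
/-!
Write `s = σ / m`, which is positive because `0 < m < 1`. By definition of the scaled Taylor residual
`R_e`, each factor of the left-hand product is `s * (R_e + y_j ∂₂f + y_i ∂₁f)`. Expanding the product
over `A` with `Finset.prod_add` twice, first splitting off the `∂₁` terms (giving `B ⊆ A`) and then the
`∂₂` terms (giving `C ⊆ B`), yields the formula pointwise in `y` (`prod_eq_sum_nested`).

Exchanging the finite sum with the integral requires each term to be integrable. All functions
involved are continuous with at most exponential growth (`ExpGrowth`), a class closed under sums and
finite products, and such functions are integrable against the Gaussian density
(`ExpGrowth.integrable_mul_gaussK`).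
-/

open MeasureTheory Finset

/-- First partial derivative of a bivariate function. -/
noncomputable def pd1 (f : ℝ → ℝ → ℝ) (a b : ℝ) : ℝ := deriv (fun u => f u b) a

/-- Second partial derivative of a bivariate function. -/
noncomputable def pd2 (f : ℝ → ℝ → ℝ) (a b : ℝ) : ℝ := deriv (fun v => f a v) b

/-- Continuous functions on `ℝ^d` of at most exponential growth, `|g y| ≤ C * exp (c * ∑ |y i|)`. -/
def ExpGrowth {d : ℕ} (g : (Fin d → ℝ) → ℝ) : Prop :=
  Continuous g ∧ ∃ C c : ℝ, 0 ≤ C ∧ 0 ≤ c ∧ ∀ y, |g y| ≤ C * Real.exp (c * ∑ i, |y i|)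

namespace ExpGrowth

variable {d : ℕ} {g h : (Fin d → ℝ) → ℝ}

lemma of_bounded (hg : Continuous g) (M : ℝ) (hM : ∀ y, |g y| ≤ M) : ExpGrowth g :=
  ⟨hg, M, 0, (abs_nonneg _).trans (hM 0), le_rfl, fun y => by simpa using hM y⟩

lemma const (a : ℝ) : ExpGrowth (fun _ : Fin d → ℝ => a) :=
  of_bounded continuous_const |a| fun _ => le_rfl

lemma coord (i : Fin d) : ExpGrowth (fun y : Fin d → ℝ => y i) := by
  refine ⟨continuous_apply i, 1, 1, zero_le_one, zero_le_one, fun y => ?_⟩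
  have h1 : |y i| ≤ ∑ j, |y j| :=
    Finset.single_le_sum (f := fun j => |y j|) (fun j _ => abs_nonneg _) (Finset.mem_univ i)
  have h2 := Real.add_one_le_exp (∑ j, |y j|)
  simp only [one_mul]
  linarith

lemma mul (hg : ExpGrowth g) (hh : ExpGrowth h) : ExpGrowth (fun y => g y * h y) := by
  obtain ⟨hgc, C, c, hC, hc, hb⟩ := hg
  obtain ⟨hhc, C', c', hC', hc', hb'⟩ := hh
  refine ⟨hgc.mul hhc, C * C', c + c', by positivity, by positivity, fun y => ?_⟩
  rw [abs_mul, add_mul, Real.exp_add]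
  calc |g y| * |h y| ≤ (C * Real.exp (c * ∑ i, |y i|)) * (C' * Real.exp (c' * ∑ i, |y i|)) :=
        mul_le_mul (hb y) (hb' y) (abs_nonneg _) (by positivity)
    _ = _ := by ring

lemma add (hg : ExpGrowth g) (hh : ExpGrowth h) : ExpGrowth (fun y => g y + h y) := by
  obtain ⟨hgc, C, c, hC, hc, hb⟩ := hg
  obtain ⟨hhc, C', c', hC', hc', hb'⟩ := hh
  refine ⟨hgc.add hhc, C + C', c + c', by positivity, by positivity, fun y => ?_⟩
  have hy : 0 ≤ ∑ i, |y i| := Finset.sum_nonneg fun _ _ => abs_nonneg _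
  have h1 : Real.exp (c * ∑ i, |y i|) ≤ Real.exp ((c + c') * ∑ i, |y i|) :=
    Real.exp_le_exp.2 (mul_le_mul_of_nonneg_right (by linarith) hy)
  have h2 : Real.exp (c' * ∑ i, |y i|) ≤ Real.exp ((c + c') * ∑ i, |y i|) :=
    Real.exp_le_exp.2 (mul_le_mul_of_nonneg_right (by linarith) hy)
  have h3 := mul_le_mul_of_nonneg_left h1 hC
  have h4 := mul_le_mul_of_nonneg_left h2 hC'
  have h5 := abs_add_le (g y) (h y)
  have h6 := hb y
  have h7 := hb' y
  linarith

lemma sub (hg : ExpGrowth g) (hh : ExpGrowth h) : ExpGrowth (fun y => g y - h y) := by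
  simpa [sub_eq_add_neg] using hg.add ((const (-1)).mul hh)

lemma prod {ι : Type*} (s : Finset ι) {F : ι → (Fin d → ℝ) → ℝ}
    (hF : ∀ e ∈ s, ExpGrowth (F e)) : ExpGrowth (fun y => ∏ e ∈ s, F e y) := by
  classical
  induction s using Finset.induction_on with
  | empty => simpa using const (d := d) 1
  | insert a s ha ih =>
    simp only [Finset.prod_insert ha]
    exact (hF a (Finset.mem_insert_self a s)).mul
      (ih fun e he => hF e (Finset.mem_insert_of_mem he))

lemma integrable_mul_gaussK (hg : ExpGrowth g) : Integrable (fun y => g y * gaussK d y) := by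
  obtain ⟨hgc, C, c, hC, hc, hb⟩ := hg
  set Z : ℝ := (2 * Real.pi) ^ (-(d : ℝ) / 2) with hZ
  have hZ0 : 0 ≤ Z := by positivity
  have hint : Integrable (fun y : Fin d → ℝ =>
      (C * Z) * ∏ i, (Real.exp (c ^ 2) * Real.exp (-(1 / 4) * (y i) ^ 2))) :=
    (Integrable.fintype_prod (f := fun (_ : Fin d) (t : ℝ) =>
      Real.exp (c ^ 2) * Real.exp (-(1 / 4) * t ^ 2))
      fun _ => (integrable_exp_neg_mul_sq (by norm_num)).const_mul _).const_mul _
  refine hint.mono' ?_ (Filter.Eventually.of_forall fun y => ?_)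
  · have : Continuous (gaussK d) := by unfold gaussK; fun_prop
    exact (hgc.mul this).aestronglyMeasurable
  · -- Completing the square, `c * |t| - t ^ 2 / 2 ≤ c ^ 2 - t ^ 2 / 4` in each coordinate.
    have hexp : Real.exp (c * ∑ i, |y i|) * Real.exp (-(∑ i, (y i) ^ 2) / 2)
        ≤ ∏ i, (Real.exp (c ^ 2) * Real.exp (-(1 / 4) * (y i) ^ 2)) := by
      simp only [← Real.exp_add, ← Real.exp_sum]
      refine Real.exp_le_exp.2 ?_
      rw [Finset.mul_sum, neg_div, Finset.sum_div, ← sub_eq_add_neg, ← Finset.sum_sub_distrib]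
      refine Finset.sum_le_sum fun i _ => ?_
      nlinarith [sq_nonneg (c - |y i| / 2), sq_abs (y i)]
    have hK : 0 ≤ gaussK d y := by unfold gaussK; positivity
    rw [Real.norm_eq_abs, abs_mul, abs_of_nonneg hK]
    calc |g y| * gaussK d y ≤ (C * Real.exp (c * ∑ i, |y i|)) * gaussK d y :=
          mul_le_mul_of_nonneg_right (hb y) hK
      _ = (C * Z) * (Real.exp (c * ∑ i, |y i|) * Real.exp (-(∑ i, (y i) ^ 2) / 2)) := by
          unfold gaussK; rw [← hZ]; ring
      _ ≤ _ := mul_le_mul_of_nonneg_left hexp (by positivity)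

end ExpGrowth

/-- The combinatorial core: a product of three-term sums is a sum over nested pairs `C ⊆ B ⊆ A`,
where `C` carries the residuals `r`, `B \ C` the terms `v * q` and `A \ B` the terms `u * p`. -/
lemma prod_eq_sum_nested {ι : Type*} [DecidableEq ι] (A : Finset ι) (s : ℝ)
    (D r u v p q : ι → ℝ) (hD : ∀ e ∈ A, D e = s * (r e + v e * q e + u e * p e)) :
    ∏ e ∈ A, D e = s ^ A.card * ∑ B ∈ A.powerset, ∑ C ∈ B.powerset,
      (∏ e ∈ B \ C, q e) * (∏ e ∈ A \ B, p e) *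
        ((∏ e ∈ C, r e) * (∏ e ∈ A \ B, u e) * (∏ e ∈ B \ C, v e)) := by
  rw [Finset.prod_congr rfl hD, Finset.prod_mul_distrib, Finset.prod_const, Finset.prod_add]
  congr 1
  refine Finset.sum_congr rfl fun B _ => ?_
  rw [Finset.prod_add, Finset.sum_mul]
  refine Finset.sum_congr rfl fun C _ => ?_
  rw [Finset.prod_mul_distrib, Finset.prod_mul_distrib]
  ring

/-- exact second-order expansion of the residual term
`Δ_A(x) = σ̃^{|A|} ∑_{C ⊆ B ⊆ A} (∏_{B∖C} ∂₂f)(∏_{A∖B} ∂₁f) ∫ ∏_C Δ¹ ∏_{A∖B} y_i ∏_{B∖C} y_j K dy`. -/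
theorem residual_term_taylor_expansion
    (d : ℕ) (hd : 1 ≤ d)
    (S : Finset (Fin d × Fin d)) (hSpairs : ∀ e ∈ S, e.1 < e.2)
    (f : Fin d → Fin d → ℝ → ℝ → ℝ)
    (hC1 : ∀ e ∈ S, ContDiff ℝ 1 (Function.uncurry (f e.1 e.2)))
    (hbdd : ∃ M : ℝ, ∀ e ∈ S, ∀ a b : ℝ,
      |f e.1 e.2 a b| ≤ M ∧ |pd1 (f e.1 e.2) a b| ≤ M ∧ |pd2 (f e.1 e.2) a b| ≤ M)
    (m σ : ℝ) (hm : m ∈ Set.Ioo (0 : ℝ) 1) (hσ : σ = Real.sqrt (1 - m ^ 2))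
    (A : Finset (Fin d × Fin d)) (hA : A ⊆ S) (x : Fin d → ℝ) :
    (∫ y : Fin d → ℝ,
        (∏ e ∈ A,
            (f e.1 e.2 ((x e.1 + σ * y e.1) / m) ((x e.2 + σ * y e.2) / m)
              - f e.1 e.2 (x e.1 / m) (x e.2 / m))) * gaussK d y)
      = (σ / m) ^ A.card *
          ∑ B ∈ A.powerset, ∑ C ∈ B.powerset,
            (∏ e ∈ B \ C, pd2 (f e.1 e.2) (x e.1 / m) (x e.2 / m)) *
            (∏ e ∈ A \ B, pd1 (f e.1 e.2) (x e.1 / m) (x e.2 / m)) *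
            ∫ y : Fin d → ℝ,
              (∏ e ∈ C,
                  (σ / m)⁻¹ *
                    ((f e.1 e.2 ((x e.1 + σ * y e.1) / m) ((x e.2 + σ * y e.2) / m)
                        - f e.1 e.2 (x e.1 / m) (x e.2 / m))
                      - σ / m *
                          (y e.1 * pd1 (f e.1 e.2) (x e.1 / m) (x e.2 / m)
                            + y e.2 * pd2 (f e.1 e.2) (x e.1 / m) (x e.2 / m)))) *
              (∏ e ∈ A \ B, y e.1) * (∏ e ∈ B \ C, y e.2) * gaussK d y := by
  obtain ⟨M, hM⟩ := hbdd
  have hm0 : m ≠ 0 := hm.1.ne'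
  have hs : σ / m ≠ 0 := by
    have : 0 < σ := by
      rw [hσ]
      exact Real.sqrt_pos.2 (by nlinarith [hm.1, hm.2])
    positivity
  set s := σ / m with hs_def
  set p : Fin d × Fin d → ℝ := fun e => pd1 (f e.1 e.2) (x e.1 / m) (x e.2 / m) with hp
  set q : Fin d × Fin d → ℝ := fun e => pd2 (f e.1 e.2) (x e.1 / m) (x e.2 / m) with hq
  set D : Fin d × Fin d → (Fin d → ℝ) → ℝ := fun e y =>
    f e.1 e.2 ((x e.1 + σ * y e.1) / m) ((x e.2 + σ * y e.2) / m)
      - f e.1 e.2 (x e.1 / m) (x e.2 / m) with hD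
  set R : Fin d × Fin d → (Fin d → ℝ) → ℝ := fun e y =>
    s⁻¹ * (D e y - s * (y e.1 * p e + y e.2 * q e)) with hR
  have hRg : ∀ e ∈ A, ExpGrowth (R e) := by
    intro e he
    have hfc : Continuous (fun y : Fin d → ℝ =>
        f e.1 e.2 ((x e.1 + σ * y e.1) / m) ((x e.2 + σ * y e.2) / m)) :=
      (hC1 e (hA he)).continuous.comp
        (f := fun y : Fin d → ℝ => ((x e.1 + σ * y e.1) / m, (x e.2 + σ * y e.2) / m))
        (by fun_prop)
    exact (ExpGrowth.const _).mul
      (((ExpGrowth.of_bounded hfc M fun y => (hM e (hA he) _ _).1).sub (ExpGrowth.const _)).sub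
        ((ExpGrowth.const _).mul
          (((ExpGrowth.coord _).mul (ExpGrowth.const _)).add
            ((ExpGrowth.coord _).mul (ExpGrowth.const _)))))
  have hint : ∀ B ∈ A.powerset, ∀ C ∈ B.powerset, Integrable (fun y : Fin d → ℝ =>
      (∏ e ∈ C, R e y) * (∏ e ∈ A \ B, y e.1) * (∏ e ∈ B \ C, y e.2) * gaussK d y) := by
    intro B hB C hC
    have hCA : C ⊆ A := (Finset.mem_powerset.1 hC).trans (Finset.mem_powerset.1 hB)
    exact (((ExpGrowth.prod C fun e he => hRg e (hCA he)).mul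
      (ExpGrowth.prod _ fun e _ => ExpGrowth.coord e.1)).mul
      (ExpGrowth.prod _ fun e _ => ExpGrowth.coord e.2)).integrable_mul_gaussK
  have hpt : ∀ y : Fin d → ℝ, (∏ e ∈ A, D e y) * gaussK d y =
      s ^ A.card * ∑ B ∈ A.powerset, ∑ C ∈ B.powerset,
        (∏ e ∈ B \ C, q e) * (∏ e ∈ A \ B, p e) *
          ((∏ e ∈ C, R e y) * (∏ e ∈ A \ B, y e.1) * (∏ e ∈ B \ C, y e.2) * gaussK d y) := by
    intro y
    rw [prod_eq_sum_nested A s (fun e => D e y) (fun e => R e y) (fun e => y e.1)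
      (fun e => y e.2) p q ?_]
    · simp only [mul_assoc, Finset.sum_mul]
    · intro e _
      simp only [hR]
      field_simp
      ring
  change (∫ y : Fin d → ℝ, (∏ e ∈ A, D e y) * gaussK d y) =
    s ^ A.card * ∑ B ∈ A.powerset, ∑ C ∈ B.powerset,
      (∏ e ∈ B \ C, q e) * (∏ e ∈ A \ B, p e) *
        ∫ y : Fin d → ℝ,
          (∏ e ∈ C, R e y) * (∏ e ∈ A \ B, y e.1) * (∏ e ∈ B \ C, y e.2) * gaussK d y
  simp only [hpt]
  rw [integral_const_mul, integral_finsetSum _ fun B hB =>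
    integrable_finsetSum _ fun C hC => (hint B hB C hC).const_mul _]
  congr 1
  refine Finset.sum_congr rfl fun B hB => ?_
  rw [integral_finsetSum _ fun C hC => (hint B hB C hC).const_mul _]
  exact Finset.sum_congr rfl fun C _ => integral_const_mul _ _
end

section
/- Suppose in addition that m ≥ 1/2 and each gradient ∇f_{i,j} is C-Lipschitz on ℝ² (the (2, C)-smoothness condition). Then for all (i,j) ∈ S and all arguments, |Δ^{(1)}_{i,j}(x_i, x_j, y_i, y_j)| ≤ C σ̃ ‖(y_i, y_j)‖², and there exists a constant c > 0 depending only on (d, C) such that for all nested subsets C ⊆ B ⊆ A ⊆ S and all x ∈ ℝ^d, the Gaussian integral satisfies | ∫_{ℝ^d} ∏_{(i,j)∈C} Δ^{(1)}_{i,j}(x_i, x_j, y_i, y_j) · ∏_{(i,j)∈A∖B} y_i · ∏_{(i,j)∈B∖C} y_j · K(y) dy | ≤ c^{|A|} · σ^{|C|}. -/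
/-!
The residual bound is the mean value theorem along the segment from `(a, b)` to `(a + u, b + v)`:
the first-order residual there is `⟨∇f(a + tu, b + tv) - ∇f(a, b), (u, v)⟩` for some `t ∈ (0, 1)`,
which Cauchy-Schwarz and the Lipschitz hypothesis bound by `C (u² + v²)`.

For the integral, put `R = 1 + ∑ yᵢ²`. Since `m ≥ 1/2`, each residual is at most `2 C σ R`, and each
coordinate is at most `R`, so the integrand is at most `(1 + 2C)^|A| σ^|C'| R^|A| K(y)`.
As `|A| ≤ d²`, the moment `∫ R^|A| K` is at most a constant depending only on `d`, because `R^(d²) K`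
is dominated by a multiple of `exp (-‖y‖²/4)`. For `|A| ≥ 1` that constant is absorbed in the
`|A|`-th power of `c`; for `A = ∅` no slack is available, and the normalisation `∫ K = 1` is used.
-/

open MeasureTheory Finset

/-- The scaled first-order Taylor residual `Δ¹_{i,j}`. -/
noncomputable def taylorRes1 (f : ℝ → ℝ → ℝ) (m σ : ℝ) (xi xj yi yj : ℝ) : ℝ :=
  (σ / m)⁻¹ *
    ((f ((xi + σ * yi) / m) ((xj + σ * yj) / m) - f (xi / m) (xj / m))
      - σ / m * (yi * pd1 f (xi / m) (xj / m) + yj * pd2 f (xi / m) (xj / m)))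

lemma hasDerivAt_line {f : ℝ → ℝ → ℝ} (hf : ContDiff ℝ 1 (Function.uncurry f)) (a b u v t : ℝ) :
    HasDerivAt (fun t : ℝ => f (a + t * u) (b + t * v))
      (u * pd1 f (a + t * u) (b + t * v) + v * pd2 f (a + t * u) (b + t * v)) t := by
  have hF : HasFDerivAt (Function.uncurry f)
      (fderiv ℝ (Function.uncurry f) (a + t * u, b + t * v)) (a + t * u, b + t * v) :=
    (hf.differentiable one_ne_zero _).hasFDerivAt
  set F := fderiv ℝ (Function.uncurry f) (a + t * u, b + t * v)
  have h1 : pd1 f (a + t * u) (b + t * v) = F (1, 0) := by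
    have h : HasDerivAt (fun s : ℝ => (s, b + t * v)) ((1 : ℝ), (0 : ℝ)) (a + t * u) :=
      (hasDerivAt_id _).prodMk (hasDerivAt_const _ _)
    exact (hF.comp_hasDerivAt (a + t * u) h).deriv
  have h2 : pd2 f (a + t * u) (b + t * v) = F (0, 1) := by
    have h : HasDerivAt (fun s : ℝ => (a + t * u, s)) ((0 : ℝ), (1 : ℝ)) (b + t * v) :=
      (hasDerivAt_const _ _).prodMk (hasDerivAt_id _)
    exact (hF.comp_hasDerivAt (b + t * v) h).deriv
  have h3 : HasDerivAt (fun s : ℝ => (a + s * u, b + s * v)) (u, v) t := by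
    have hu : HasDerivAt (fun s : ℝ => a + s * u) u t := by
      simpa using ((hasDerivAt_id t).mul_const u).const_add a
    have hv : HasDerivAt (fun s : ℝ => b + s * v) v t := by
      simpa using ((hasDerivAt_id t).mul_const v).const_add b
    exact hu.prodMk hv
  have h4 : F (u, v) = u * F (1, 0) + v * F (0, 1) := by
    have : ((u, v) : ℝ × ℝ) = u • ((1 : ℝ), (0 : ℝ)) + v • ((0 : ℝ), (1 : ℝ)) := by simp
    rw [this, map_add, map_smul, map_smul, smul_eq_mul, smul_eq_mul]
  rw [h1, h2, ← h4]
  exact hF.comp_hasDerivAt t h3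

lemma taylor_bound {f : ℝ → ℝ → ℝ} (hf : ContDiff ℝ 1 (Function.uncurry f)) {C : ℝ} (hC : 0 < C)
    (hL : ∀ a b a' b' : ℝ,
      Real.sqrt ((pd1 f a b - pd1 f a' b') ^ 2 + (pd2 f a b - pd2 f a' b') ^ 2)
        ≤ C * Real.sqrt ((a - a') ^ 2 + (b - b') ^ 2)) (a b u v : ℝ) :
    |f (a + u) (b + v) - f a b - (u * pd1 f a b + v * pd2 f a b)| ≤ C * (u ^ 2 + v ^ 2) := by
  obtain ⟨t, ht, hmv⟩ := exists_hasDerivAt_eq_slope (fun t : ℝ => f (a + t * u) (b + t * v)) _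
    one_pos (fun t _ => (hasDerivAt_line hf a b u v t).continuousAt.continuousWithinAt)
    (fun t _ => hasDerivAt_line hf a b u v t)
  simp only [one_mul, zero_mul, add_zero, sub_zero, div_one] at hmv
  rw [← hmv]
  have hL' := hL (a + t * u) (b + t * v) a b
  set p := pd1 f (a + t * u) (b + t * v) - pd1 f a b with hp
  set q := pd2 f (a + t * u) (b + t * v) - pd2 f a b with hq
  have e1 : u * pd1 f (a + t * u) (b + t * v) + v * pd2 f (a + t * u) (b + t * v)
      - (u * pd1 f a b + v * pd2 f a b) = u * p + v * q := by rw [hp, hq]; ring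
  have e2 : (a + t * u - a) ^ 2 + (b + t * v - b) ^ 2 = t ^ 2 * (u ^ 2 + v ^ 2) := by ring
  rw [e2, Real.sqrt_mul (sq_nonneg t), Real.sqrt_sq ht.1.le] at hL'
  rw [e1]
  have hs : 0 ≤ u ^ 2 + v ^ 2 := by positivity
  set r := Real.sqrt (u ^ 2 + v ^ 2) with hr
  have hr0 : 0 ≤ r := Real.sqrt_nonneg _
  have hrr : r * r = u ^ 2 + v ^ 2 := Real.mul_self_sqrt hs
  have hcs : |u * p + v * q| ≤ r * Real.sqrt (p ^ 2 + q ^ 2) := by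
    rw [hr, ← Real.sqrt_mul hs]
    apply Real.abs_le_sqrt
    nlinarith [sq_nonneg (u * q - v * p)]
  have hle : Real.sqrt (p ^ 2 + q ^ 2) ≤ C * r := by
    refine hL'.trans ?_
    have : t * r ≤ r := by nlinarith [ht.2]
    gcongr
  calc |u * p + v * q| ≤ r * Real.sqrt (p ^ 2 + q ^ 2) := hcs
    _ ≤ r * (C * r) := by gcongr
    _ = C * (u ^ 2 + v ^ 2) := by rw [← hrr]; ring

lemma taylorRes1_bound {f : ℝ → ℝ → ℝ} (hf : ContDiff ℝ 1 (Function.uncurry f)) {C : ℝ}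
    (hC : 0 < C) (hL : ∀ a b a' b' : ℝ,
      Real.sqrt ((pd1 f a b - pd1 f a' b') ^ 2 + (pd2 f a b - pd2 f a' b') ^ 2)
        ≤ C * Real.sqrt ((a - a') ^ 2 + (b - b') ^ 2)) {m σ : ℝ} (hm : 0 < m) (hσ : 0 < σ)
    (xi xj yi yj : ℝ) :
    |taylorRes1 f m σ xi xj yi yj| ≤ C * (σ / m) * (yi ^ 2 + yj ^ 2) := by
  have h := taylor_bound hf hC hL (xi / m) (xj / m) (σ / m * yi) (σ / m * yj)
  have hs : 0 < σ / m := div_pos hσ hm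
  have e1 : xi / m + σ / m * yi = (xi + σ * yi) / m := by ring
  have e2 : xj / m + σ / m * yj = (xj + σ * yj) / m := by ring
  rw [e1, e2] at h
  unfold taylorRes1
  rw [abs_mul, abs_of_pos (inv_pos.2 hs), inv_mul_le_iff₀ hs]
  refine (le_of_eq ?_).trans (h.trans (le_of_eq ?_))
  · congr 1; ring
  · ring

lemma exp_sum_eq_prod {d : ℕ} (b : ℝ) (y : Fin d → ℝ) :
    Real.exp (-b * ∑ i, (y i) ^ 2) = ∏ i, Real.exp (-b * (y i) ^ 2) := by
  rw [Finset.mul_sum, Real.exp_sum]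

lemma integrable_exp_sum (d : ℕ) {b : ℝ} (hb : 0 < b) :
    Integrable (fun y : Fin d → ℝ => Real.exp (-b * ∑ i, (y i) ^ 2)) := by
  simp_rw [exp_sum_eq_prod]
  exact Integrable.fintype_prod (fun _ => integrable_exp_neg_mul_sq hb)

lemma integral_gaussK (d : ℕ) : ∫ y : Fin d → ℝ, gaussK d y = 1 := by
  have h : ∀ y : Fin d → ℝ, gaussK d y
      = (2 * Real.pi) ^ (-(d : ℝ) / 2) * ∏ i, Real.exp (-(1 / 2) * (y i) ^ 2) := by
    intro y
    rw [← exp_sum_eq_prod, gaussK]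
    congr 2
    ring
  simp_rw [h]
  have hp : (0 : ℝ) < 2 * Real.pi := by positivity
  rw [integral_const_mul,
    integral_fintype_prod_volume_eq_pow (fun t : ℝ => Real.exp (-(1 / 2) * t ^ 2)),
    integral_gaussian, Fintype.card_fin, show Real.pi / (1 / 2) = 2 * Real.pi by ring,
    Real.sqrt_eq_rpow, ← Real.rpow_natCast, ← Real.rpow_mul hp.le, ← Real.rpow_add hp]
  rw [show -(d : ℝ) / 2 + 1 / 2 * (d : ℝ) = 0 by ring, Real.rpow_zero]

/-- An integrable majorant of `(1 + ‖y‖²)^N K(y)`. -/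
lemma exists_majorant (d N : ℕ) : ∃ G : (Fin d → ℝ) → ℝ, Integrable G ∧
    ∀ y, (1 + ∑ i, (y i) ^ 2) ^ N * gaussK d y ≤ G y := by
  refine ⟨fun y => (4 ^ N * N.factorial * Real.exp (1 / 4) * (2 * Real.pi) ^ (-(d : ℝ) / 2)) *
    Real.exp (-(1 / 4) * ∑ i, (y i) ^ 2),
    (integrable_exp_sum d (by norm_num)).const_mul _, fun y => ?_⟩
  have hs : 0 ≤ ∑ i, (y i) ^ 2 := Finset.sum_nonneg fun i _ => sq_nonneg _
  set s := ∑ i, (y i) ^ 2 with hsd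
  -- One term of the exponential series bounds the polynomial factor.
  have h := Real.pow_div_factorial_le_exp ((1 + s) / 4) (by positivity) N
  rw [div_pow, div_div, div_le_iff₀ (by positivity)] at h
  rw [gaussK, ← hsd]
  calc (1 + s) ^ N * ((2 * Real.pi) ^ (-(d : ℝ) / 2) * Real.exp (-s / 2))
      ≤ (Real.exp ((1 + s) / 4) * (4 ^ N * N.factorial)) *
        ((2 * Real.pi) ^ (-(d : ℝ) / 2) * Real.exp (-s / 2)) := by gcongr
    _ = (4 ^ N * N.factorial * (2 * Real.pi) ^ (-(d : ℝ) / 2)) *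
        (Real.exp ((1 + s) / 4) * Real.exp (-s / 2)) := by ring
    _ = (4 ^ N * N.factorial * (2 * Real.pi) ^ (-(d : ℝ) / 2)) *
        (Real.exp (1 / 4) * Real.exp (-(1 / 4) * s)) := by
      rw [← Real.exp_add, ← Real.exp_add]; congr 2; ring
    _ = _ := by ring

lemma gaussK_nonneg (d : ℕ) (y : Fin d → ℝ) : 0 ≤ gaussK d y := by
  unfold gaussK; positivity

lemma abs_coord_le {d : ℕ} (y : Fin d → ℝ) (i : Fin d) : |y i| ≤ 1 + ∑ i, (y i) ^ 2 := by
  have h := Finset.single_le_sum (f := fun i => (y i) ^ 2) (fun i _ => sq_nonneg _)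
    (Finset.mem_univ i)
  nlinarith [sq_abs (y i), sq_nonneg (|y i| - 1)]

lemma sq_add_sq_le {d : ℕ} (y : Fin d → ℝ) {i j : Fin d} (hij : i ≠ j) :
    (y i) ^ 2 + (y j) ^ 2 ≤ 1 + ∑ i, (y i) ^ 2 := by
  have h := Finset.sum_le_sum_of_subset_of_nonneg (f := fun i => (y i) ^ 2)
    (Finset.subset_univ {i, j}) (fun i _ _ => sq_nonneg _)
  rw [Finset.sum_pair hij] at h
  linarith

lemma prod_abs_le {ι : Type*} (s : Finset ι) (g : ι → ℝ) (r : ℝ) (h : ∀ e ∈ s, |g e| ≤ r) :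
    |∏ e ∈ s, g e| ≤ r ^ s.card := by
  rw [Finset.abs_prod]
  exact (Finset.prod_le_prod (fun _ _ => abs_nonneg _) h).trans (by simp)

/-- if `m ≥ 1/2` and each gradient `∇f_{i,j}` is `C`-Lipschitz, then
`|Δ¹_{i,j}| ≤ C σ̃ ‖(y_i,y_j)‖²`, and there is `c > 0` depending only on `(d, C)` with
`|∫ ∏_C Δ¹ ∏_{A∖B} y_i ∏_{B∖C} y_j K dy| ≤ c^{|A|} σ^{|C|}` for all `C ⊆ B ⊆ A ⊆ S`. -/
theorem taylor_residual_bounds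
    (d : ℕ) (hd : 1 ≤ d) (C : ℝ) (hC : 0 < C) :
    ∃ c : ℝ, 0 < c ∧
      ∀ (S : Finset (Fin d × Fin d)), (∀ e ∈ S, e.1 < e.2) →
      ∀ f : Fin d → Fin d → ℝ → ℝ → ℝ,
        (∀ e ∈ S, ContDiff ℝ 1 (Function.uncurry (f e.1 e.2))) →
        (∃ M : ℝ, ∀ e ∈ S, ∀ a b : ℝ, |f e.1 e.2 a b| ≤ M) →
      ∀ m σ : ℝ, m ∈ Set.Ico (1 / 2 : ℝ) 1 → σ = Real.sqrt (1 - m ^ 2) →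
        (∀ e ∈ S, ∀ a b a' b' : ℝ,
          Real.sqrt ((pd1 (f e.1 e.2) a b - pd1 (f e.1 e.2) a' b') ^ 2
              + (pd2 (f e.1 e.2) a b - pd2 (f e.1 e.2) a' b') ^ 2)
            ≤ C * Real.sqrt ((a - a') ^ 2 + (b - b') ^ 2)) →
      (∀ e ∈ S, ∀ xi xj yi yj : ℝ,
          |taylorRes1 (f e.1 e.2) m σ xi xj yi yj| ≤ C * (σ / m) * (yi ^ 2 + yj ^ 2)) ∧
      (∀ A ∈ S.powerset, ∀ B ∈ A.powerset, ∀ C' ∈ B.powerset, ∀ x : Fin d → ℝ,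
          |∫ y : Fin d → ℝ,
              (∏ e ∈ C', taylorRes1 (f e.1 e.2) m σ (x e.1) (x e.2) (y e.1) (y e.2)) *
              (∏ e ∈ A \ B, y e.1) * (∏ e ∈ B \ C', y e.2) * gaussK d y|
            ≤ c ^ A.card * σ ^ C'.card) := by
  obtain ⟨G, hGi, hG⟩ := exists_majorant d (d * d)
  refine ⟨(1 + 2 * C) * (1 + |∫ y, G y|), by positivity, ?_⟩
  intro S hS f hf _ m σ hm hσ hL
  have hm0 : 0 < m := by linarith [hm.1]
  have hσ0 : 0 < σ := by
    rw [hσ]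
    apply Real.sqrt_pos.2
    nlinarith [hm.2]
  have hres : ∀ e ∈ S, ∀ xi xj yi yj : ℝ,
      |taylorRes1 (f e.1 e.2) m σ xi xj yi yj| ≤ C * (σ / m) * (yi ^ 2 + yj ^ 2) :=
    fun e he => taylorRes1_bound (hf e he) hC (hL e he) hm0 hσ0
  refine ⟨hres, ?_⟩
  intro A hA B hB C' hC' x
  rw [Finset.mem_powerset] at hA hB hC'
  rcases A.eq_empty_or_nonempty with rfl | hne
  · obtain rfl := Finset.subset_empty.1 hB
    obtain rfl := Finset.subset_empty.1 hC'
    simp [integral_gaussK]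
  have hcard : C'.card + (A \ B).card + (B \ C').card = A.card := by
    have h1 := Finset.card_sdiff_add_card_eq_card hB
    have h2 := Finset.card_sdiff_add_card_eq_card hC'
    omega
  have hAN : A.card ≤ d * d := by
    simpa using Finset.card_le_univ A
  have hσm : σ / m ≤ 2 * σ := by
    rw [div_le_iff₀ hm0]
    nlinarith [hm.1]
  have hpt : ∀ y : Fin d → ℝ,
      ‖(∏ e ∈ C', taylorRes1 (f e.1 e.2) m σ (x e.1) (x e.2) (y e.1) (y e.2)) *
        (∏ e ∈ A \ B, y e.1) * (∏ e ∈ B \ C', y e.2) * gaussK d y‖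
        ≤ ((1 + 2 * C) ^ A.card * σ ^ C'.card) * G y := by
    intro y
    have hR1 : 1 ≤ 1 + ∑ i, (y i) ^ 2 := by
      linarith [Finset.sum_nonneg fun (i : Fin d) (_ : i ∈ Finset.univ) => sq_nonneg (y i)]
    have hG' := hG y
    have hc := abs_coord_le y
    have hsq := @sq_add_sq_le d y
    set R := 1 + ∑ i, (y i) ^ 2
    have hR0 : 0 < R := by linarith
    have b1 := prod_abs_le C'
      (fun e => taylorRes1 (f e.1 e.2) m σ (x e.1) (x e.2) (y e.1) (y e.2)) ((2 * C) * σ * R)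
      (fun e he => by
        have heS := hA (hB (hC' he))
        calc _ ≤ C * (σ / m) * ((y e.1) ^ 2 + (y e.2) ^ 2) := hres e heS _ _ _ _
          _ ≤ C * (2 * σ) * R := by
            gcongr
            exact hsq (hS e heS).ne
          _ = _ := by ring)
    have b2 := prod_abs_le (A \ B) (fun e => y e.1) R (fun e _ => hc _)
    have b3 := prod_abs_le (B \ C') (fun e => y e.2) R (fun e _ => hc _)
    have hK := gaussK_nonneg d y
    rw [Real.norm_eq_abs, abs_mul, abs_mul, abs_mul, abs_of_nonneg hK]
    calc _ ≤ ((2 * C) * σ * R) ^ C'.card * R ^ (A \ B).card * R ^ (B \ C').card * gaussK d y := by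
          gcongr
      _ = (2 * C) ^ C'.card * σ ^ C'.card * (R ^ A.card * gaussK d y) := by
          rw [← hcard, mul_pow, mul_pow]; ring
      _ ≤ (1 + 2 * C) ^ A.card * σ ^ C'.card * (R ^ (d * d) * gaussK d y) := by
          have : (2 * C) ^ C'.card ≤ (1 + 2 * C) ^ A.card :=
            (pow_le_pow_left₀ (by positivity) (by linarith) _).trans
              (pow_le_pow_right₀ (by linarith) (by omega))
          gcongr
      _ ≤ _ := by gcongr
  have hint := norm_integral_le_of_norm_le (hGi.const_mul ((1 + 2 * C) ^ A.card * σ ^ C'.card))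
    (Filter.Eventually.of_forall hpt)
  rw [integral_const_mul, Real.norm_eq_abs] at hint
  refine hint.trans ?_
  -- Here `1 ≤ |A|`, so the constant moment bound is at most its own `|A|`-th power.
  have hI : ∫ y, G y ≤ (1 + |∫ y, G y|) ^ A.card :=
    ((le_abs_self _).trans (by linarith)).trans
      (le_self_pow₀ (by linarith [abs_nonneg (∫ y, G y)]) hne.card_pos.ne')
  calc _ ≤ (1 + 2 * C) ^ A.card * σ ^ C'.card * (1 + |∫ y, G y|) ^ A.card := by gcongr
    _ = _ := by rw [mul_pow]; ring
end

section
/- There exist constants c ≥ 1 and N0 depending only on (d, |S'|, L0, M, c2) such that for every integer N ≥ N0 there is a ReLU network G̃: ℝ^{d+1} → ℝ of depth at most c and width at most c · N · log N satisfying sup_{(t,x) ∈ Ω_N} | G̃(x, t) − ∏_{(i,j)∈S'} f_{i,j}(x_i/m_t, x_j/m_t) | ≤ c · N^{−1}, where Ω_N = { (t, x) : t ∈ [N^{−10}, N^{−1/(10d)}], x ∈ [−m_t, m_t]^d }. -/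
/-!
Every operation needed (dividing a coordinate by `m_t`, applying `f_{i,j}`, multiplying two bounded
numbers) is a Lipschitz function of two real variables, so the theorem reduces to one construction:
a function that is `L`-Lipschitz on a square can be approximated with error `O(1/N)` by a ReLU
network with two hidden layers of `O(N)` neurons (`Lvl.apply₂`).

For that construction take an `N × N` grid. Piecewise linear interpolation of each row of grid values
in the second variable is an affine combination of the same `O(N)` first-layer neurons, so that all
`N` rows `g_0, …, g_N` are available to the second layer at once; the `N²` grid values are the
weights between the two layers. Products of hat functions with rows are avoided by telescoping:
`g_0 + ∑_i (g_{i+1} - g_i)`, where the `i`-th increment, of size `O(1/N)`, is switched on by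
projecting it to `[-s_i, s_i]` with `s_i` a multiple of `relu (a - i)`, `a` being the first variable
in grid units. The projection is an exact ReLU expression; it is zero left of the `i`-th cell and
the full increment right of it, and the single partially switched increment costs only `O(1/N)`
(`telescope`, `gridNet_error`). Outside the square the network behaves like the function composed
with the projection to the square, so approximate arguments do no harm.

The network consists of the maps `(x_i, t) ↦ x_i / m_t` (Lipschitz because `β` is bounded by `c2`
and `t ≤ 1`; `scaled_lipschitz`), then the `f_{i,j}`, then `K` successive multiplications
(`Lvl.prod`). It has depth `4 + 2 K` and width `O(N)`, hence width at most `c N log N`. The predicate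
`Lvl` keeps track of depth and width, and `Lvl.exists_net` turns it into an actual `ReLUNet`.
-/

open MeasureTheory Finset

/-- The ReLU activation. -/
def relu (x : ℝ) : ℝ := max x 0

/-- A fully connected ReLU network from `ℝ^k` to `ℝ^m` with depth `L` (i.e. `L+1` affine maps
interleaved with `L` entrywise ReLU activations) and width `W`: layer dimensions
`(k, W, …, W, m)`. -/
structure ReLUNet (k m L W : ℕ) where
  Ain : Fin W → Fin k → ℝ
  bin : Fin W → ℝ
  Ahid : Fin (L - 1) → Fin W → Fin W → ℝ
  bhid : Fin (L - 1) → Fin W → ℝ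
  Aout : Fin m → Fin W → ℝ
  bout : Fin m → ℝ

/-- Evaluation of a ReLU network. -/
noncomputable def ReLUNet.eval {k m L W : ℕ} (net : ReLUNet k m L W)
    (x : Fin k → ℝ) : Fin m → ℝ :=
  let h0 : Fin W → ℝ := fun w => relu ((∑ j, net.Ain w j * x j) + net.bin w)
  let h : Fin W → ℝ := (List.finRange (L - 1)).foldl
    (fun v i => fun w => relu ((∑ u, net.Ahid i w u * v u) + net.bhid i w)) h0
  fun i => (∑ u, net.Aout i u * h u) + net.bout i

/-- `m_t = exp(−∫_0^t β_s ds)`. -/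
noncomputable def mT (betaF : ℝ → ℝ) (t : ℝ) : ℝ :=
  Real.exp (-(∫ s in (0 : ℝ)..t, betaF s))

/-! ### Layered ReLU computability -/

/-- `Lvl n w l S`: every function in `S` is an affine combination of the neurons of the `l`-th
hidden layer of one common ReLU network on `ℝ^n` whose hidden layers all have at most `w` neurons.
For `l = 0` this means that the functions are affine. Affine combinations are encoded as the linear
span of the constant `1` and the neurons. -/
def Lvl (n w : ℕ) : ℕ → Set ((Fin n → ℝ) → ℝ) → Prop
  | 0, S => S ⊆ Submodule.span ℝ (insert 1 (Set.range fun (j : Fin n) (x : Fin n → ℝ) => x j))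
  | l + 1, S => ∃ s : Finset ((Fin n → ℝ) → ℝ), s.card ≤ w ∧ Lvl n w l ↑s ∧
      S ⊆ Submodule.span ℝ (insert 1 ((fun h x => relu (h x)) '' (s : Set ((Fin n → ℝ) → ℝ))))

lemma Lvl.mono_width {n w w' : ℕ} (hw : w ≤ w') :
    ∀ {l : ℕ} {S : Set ((Fin n → ℝ) → ℝ)}, Lvl n w l S → Lvl n w' l S
  | 0, _, h => h
  | _ + 1, _, ⟨s, hs, h1, h2⟩ => ⟨s, hs.trans hw, h1.mono_width hw, h2⟩

lemma Lvl.union {n w w' : ℕ} : ∀ {l : ℕ} {S S' : Set ((Fin n → ℝ) → ℝ)},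
    Lvl n w l S → Lvl n w' l S' → Lvl n (w + w') l (S ∪ S')
  | 0, _, _, h, h' => Set.union_subset h h'
  | l + 1, S, S', ⟨s, hs, h1, h2⟩, ⟨s', hs', h1', h2'⟩ => by
    classical
    refine ⟨s ∪ s', (Finset.card_union_le _ _).trans (by omega), ?_, ?_⟩
    · rw [Finset.coe_union]
      exact h1.union h1'
    · refine Set.union_subset (h2.trans ?_) (h2'.trans ?_)
      · exact Submodule.span_mono (Set.insert_subset_insert (Set.image_mono (by simp)))
      · exact Submodule.span_mono (Set.insert_subset_insert (Set.image_mono (by simp)))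

lemma Lvl.of_subset_span {n w : ℕ} : ∀ {l : ℕ} {S T : Set ((Fin n → ℝ) → ℝ)},
    Lvl n w l S → T ⊆ Submodule.span ℝ (insert 1 S) → Lvl n w l T
  | 0, S, T, h, hT => by
    refine hT.trans (Submodule.span_le.2 (Set.insert_subset ?_ h))
    exact Submodule.subset_span (Set.mem_insert _ _)
  | l + 1, S, T, ⟨s, hs, h1, h2⟩, hT => by
    refine ⟨s, hs, h1, hT.trans (Submodule.span_le.2 (Set.insert_subset ?_ h2))⟩
    exact Submodule.subset_span (Set.mem_insert _ _)

/-- Appending one hidden layer whose preactivations form the finite set `s`. -/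
lemma Lvl.step {n w l : ℕ} {S T : Set ((Fin n → ℝ) → ℝ)} (h : Lvl n w l S)
    (s : Finset ((Fin n → ℝ) → ℝ)) (hs : s.card ≤ w)
    (hsS : (s : Set ((Fin n → ℝ) → ℝ)) ⊆ Submodule.span ℝ (insert 1 S))
    (hT : T ⊆ Submodule.span ℝ
      (insert 1 ((fun h x => relu (h x)) '' (s : Set ((Fin n → ℝ) → ℝ))))) :
    Lvl n w (l + 1) T :=
  ⟨s, hs, h.of_subset_span hsS, hT⟩

lemma relu_sub_relu_neg (a : ℝ) : relu a - relu (-a) = a := by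
  unfold relu
  rcases le_total a 0 with h | h
  · rw [max_eq_right h, max_eq_left (by linarith)]; ring
  · rw [max_eq_left h, max_eq_right (by linarith)]; ring

lemma Lvl.succ {n w l : ℕ} {g : (Fin n → ℝ) → ℝ} (hw : 2 ≤ w) (h : Lvl n w l {g}) :
    Lvl n w (l + 1) {g} := by
  classical
  refine h.step {g, -g} (Finset.card_le_two.trans hw) ?_ ?_
  · have hg : g ∈ Submodule.span ℝ (insert 1 ({g} : Set ((Fin n → ℝ) → ℝ))) :=
      Submodule.subset_span (by simp)
    intro f hf
    simp only [Finset.coe_insert, Finset.coe_singleton, Set.mem_insert_iff,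
      Set.mem_singleton_iff] at hf
    rcases hf with rfl | rfl
    · exact hg
    · exact Submodule.neg_mem _ hg
  · rintro f rfl
    have : f = (fun x => relu (f x)) - (fun x => relu ((-f) x)) := by
      funext x
      simp [relu_sub_relu_neg]
    have hf : ∀ h ∈ ({f, -f} : Finset ((Fin n → ℝ) → ℝ)), (fun x => relu (h x)) ∈
        Submodule.span ℝ (insert 1 ((fun h x => relu (h x)) ''
          (({f, -f} : Finset ((Fin n → ℝ) → ℝ)) : Set ((Fin n → ℝ) → ℝ)))) :=
      fun h hh => Submodule.subset_span (Set.mem_insert_of_mem _ ⟨h, hh, rfl⟩)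
    have hsub := Submodule.sub_mem _ (hf f (by simp)) (hf (-f) (by simp))
    rwa [← this] at hsub

lemma Lvl.add_depth {n w l : ℕ} {g : (Fin n → ℝ) → ℝ} (hw : 2 ≤ w) (h : Lvl n w l {g}) :
    ∀ k, Lvl n w (l + k) {g}
  | 0 => h
  | k + 1 => (h.add_depth hw k).succ hw

/-- The state of the last hidden layer of a network with `l + 1` hidden layers. -/
noncomputable def hidState {k W l : ℕ} (Ain : Fin W → Fin k → ℝ) (bin : Fin W → ℝ)
    (Ahid : Fin l → Fin W → Fin W → ℝ) (bhid : Fin l → Fin W → ℝ) (x : Fin k → ℝ) : Fin W → ℝ :=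
  (List.finRange l).foldl
    (fun v i => fun w => relu ((∑ u, Ahid i w u * v u) + bhid i w))
    (fun w => relu ((∑ j, Ain w j * x j) + bin w))

lemma hidState_snoc {k W l : ℕ} (Ain : Fin W → Fin k → ℝ) (bin : Fin W → ℝ)
    (Ahid : Fin l → Fin W → Fin W → ℝ) (bhid : Fin l → Fin W → ℝ)
    (A : Fin W → Fin W → ℝ) (b : Fin W → ℝ) (x : Fin k → ℝ) (w : Fin W) :
    hidState Ain bin (Fin.snoc (α := fun _ => Fin W → Fin W → ℝ) Ahid A)
      (Fin.snoc (α := fun _ => Fin W → ℝ) bhid b) x w =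
      relu ((∑ u, A w u * hidState Ain bin Ahid bhid x u) + b w) := by
  unfold hidState
  rw [List.finRange_succ_last, List.foldl_append, List.foldl_map]
  simp

/-- Coefficients of an element of the span of `1` and a finite family. -/
lemma exists_coeffs {E ι : Type*} [Fintype ι] (v : ι → E → ℝ) (g : E → ℝ)
    (hg : g ∈ Submodule.span ℝ (insert 1 (Set.range v))) :
    ∃ (a : ι → ℝ) (b : ℝ), ∀ x, g x = (∑ u, a u * v u x) + b := by
  obtain ⟨b, z, hz, rfl⟩ := Submodule.mem_span_insert.1 hg
  obtain ⟨a, rfl⟩ := (Submodule.mem_span_range_iff_exists_fun ℝ).1 hz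
  refine ⟨a, b, fun x => ?_⟩
  simp [Finset.sum_apply, add_comm]

/-- A finite set of at most `W` functions can be enumerated by `Fin W`, padding with `0`. -/
lemma exists_enum {E : Type*} (W : ℕ) (s : Finset (E → ℝ)) (hs : s.card ≤ W)
    (V : Submodule ℝ (E → ℝ)) (hV : (s : Set (E → ℝ)) ⊆ V) :
    ∃ q : Fin W → E → ℝ, (∀ w, q w ∈ V) ∧ ∀ h ∈ s, ∃ w, q w = h := by
  refine ⟨fun w => if h : (w : ℕ) < s.card then (s.equivFin.symm ⟨w, h⟩ : E → ℝ) else 0, ?_, ?_⟩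
  · intro w
    dsimp only
    split_ifs with h
    · exact hV (s.equivFin.symm ⟨w, h⟩).2
    · exact V.zero_mem
  · intro h hh
    refine ⟨⟨s.equivFin ⟨h, hh⟩, (s.equivFin ⟨h, hh⟩).2.trans_le hs⟩, ?_⟩
    simp

lemma Lvl.exists_hidState {n W : ℕ} : ∀ {l : ℕ} (s : Finset ((Fin n → ℝ) → ℝ)), s.card ≤ W →
    Lvl n W l ↑s → ∃ (Ain : Fin W → Fin n → ℝ) (bin : Fin W → ℝ)
      (Ahid : Fin l → Fin W → Fin W → ℝ) (bhid : Fin l → Fin W → ℝ),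
      ∀ h ∈ s, ∃ w, ∀ x, hidState Ain bin Ahid bhid x w = relu (h x)
  | 0, s, hs, h => by
    obtain ⟨q, hq, hsq⟩ := exists_enum W s hs _ h
    choose A b hAb using fun w => exists_coeffs _ _ (hq w)
    refine ⟨A, b, Fin.elim0, Fin.elim0, fun g hg => ?_⟩
    obtain ⟨w, rfl⟩ := hsq g hg
    exact ⟨w, fun x => by simp [hidState, hAb w x]⟩
  | l + 1, s, hs, ⟨s', hs', h1, h2⟩ => by
    obtain ⟨Ain, bin, Ahid, bhid, H⟩ := h1.exists_hidState s' hs'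
    have h3 : (s : Set ((Fin n → ℝ) → ℝ)) ⊆ Submodule.span ℝ
        (insert 1 (Set.range fun w x => hidState Ain bin Ahid bhid x w)) := by
      refine h2.trans (Submodule.span_mono (Set.insert_subset_insert ?_))
      rintro _ ⟨g, hg, rfl⟩
      obtain ⟨w, hw⟩ := H g hg
      exact ⟨w, funext hw⟩
    obtain ⟨q, hq, hsq⟩ := exists_enum W s hs _ h3
    choose A b hAb using fun w => exists_coeffs _ _ (hq w)
    refine ⟨Ain, bin, Fin.snoc (α := fun _ => Fin W → Fin W → ℝ) Ahid A,
      Fin.snoc (α := fun _ => Fin W → ℝ) bhid b, fun g hg => ?_⟩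
    obtain ⟨w, rfl⟩ := hsq g hg
    exact ⟨w, fun x => by rw [hidState_snoc, hAb w x]⟩

lemma Lvl.exists_net {n W l : ℕ} {g : (Fin n → ℝ) → ℝ} (h : Lvl n W (l + 1) {g}) :
    ∃ net : ReLUNet n 1 (l + 1) W, ∀ x, net.eval x 0 = g x := by
  obtain ⟨s, hs, h1, h2⟩ := h
  obtain ⟨Ain, bin, Ahid, bhid, H⟩ := h1.exists_hidState s hs
  have h3 : g ∈ Submodule.span ℝ
      (insert 1 (Set.range fun w x => hidState Ain bin Ahid bhid x w)) := by
    refine Submodule.span_mono (Set.insert_subset_insert ?_) (h2 rfl)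
    rintro _ ⟨g, hg, rfl⟩
    obtain ⟨w, hw⟩ := H g hg
    exact ⟨w, funext hw⟩
  obtain ⟨a, b, hab⟩ := exists_coeffs _ _ h3
  refine ⟨⟨Ain, bin, Ahid, bhid, fun _ => a, fun _ => b⟩, fun x => ?_⟩
  rw [hab x]
  rfl

/-! ### Bivariate Lipschitz functions with two hidden layers -/

/-- Telescoping: if the `k`-th increment of `v` is switched off for `a ≤ k`, fully switched on for
`k + 1 ≤ a`, and never exceeds `D` in absolute value, then the sum of the switched increments is
within `D` of `v` at a grid index within distance `1` of the projection of `a` to `[0, N]`. -/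
lemma telescope (N : ℕ) (a D : ℝ) (v T : ℕ → ℝ) (hD : ∀ k, |T k| ≤ D)
    (h0 : ∀ k : ℕ, a ≤ k → T k = 0) (h1 : ∀ k : ℕ, (k : ℝ) + 1 ≤ a → T k = v (k + 1) - v k) :
    ∃ k ≤ N, |max 0 (min (N : ℝ) a) - k| ≤ 1 ∧ |v 0 + ∑ j ∈ Finset.range N, T j - v k| ≤ D := by
  have hD0 : 0 ≤ D := (abs_nonneg _).trans (hD 0)
  have key : ∀ k : ℕ, (k : ℝ) ≤ a → ∑ j ∈ Finset.range k, T j = v k - v 0 := by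
    intro k hk
    rw [← Finset.sum_range_sub]
    refine Finset.sum_congr rfl fun j hj => h1 j ?_
    have : ((j + 1 : ℕ) : ℝ) ≤ k := by exact_mod_cast Finset.mem_range.1 hj
    push_cast at this
    linarith
  rcases le_total a 0 with ha | ha
  · refine ⟨0, Nat.zero_le _, ?_, ?_⟩
    · rw [max_eq_left ((min_le_right _ _).trans ha)]; simp
    · rw [Finset.sum_eq_zero fun j _ => h0 j (ha.trans (Nat.cast_nonneg j))]
      simpa using hD0
  rcases le_total (N : ℝ) a with hN | hN
  · refine ⟨N, le_rfl, ?_, ?_⟩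
    · rw [min_eq_left hN, max_eq_right (Nat.cast_nonneg _)]; simp
    · rw [key N hN]; simpa using hD0
  · rw [min_eq_right hN, max_eq_right ha]
    have hk1 := Nat.floor_le ha
    have hk2 := Nat.lt_floor_add_one a
    set k := ⌊a⌋₊
    have hkN : k ≤ N := by exact_mod_cast hk1.trans hN
    refine ⟨k, hkN, abs_le.2 ⟨by linarith, by linarith⟩, ?_⟩
    have hs : |∑ j ∈ Finset.Ico k N, T j| ≤ D := by
      rcases hkN.eq_or_lt with h | h
      · simpa [h] using hD0
      · rw [Finset.sum_eq_sum_Ico_succ_bot h, Finset.sum_eq_zero fun j hj => h0 j ?_]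
        · simpa using hD k
        · have : ((k + 1 : ℕ) : ℝ) ≤ j := by exact_mod_cast (Finset.mem_Ico.1 hj).1
          push_cast at this
          linarith
    rw [← Finset.sum_range_add_sum_Ico _ hkN, key k hk1]
    convert hs using 2
    ring

/-- The unit ramp `ψ_k`, equal to `0` left of `k` and to `1` right of `k + 1`. -/
noncomputable def ramp (k : ℕ) (a : ℝ) : ℝ := relu (a - k) - relu (a - (k + 1 : ℕ))

lemma ramp_facts (k : ℕ) (a : ℝ) : (a ≤ k → ramp k a = 0) ∧ ((k : ℝ) + 1 ≤ a → ramp k a = 1) ∧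
    |ramp k a| ≤ 1 := by
  unfold ramp relu
  push_cast
  refine ⟨fun h => ?_, fun h => ?_, ?_⟩
  · rw [max_eq_right (by linarith), max_eq_right (by linarith)]; ring
  · rw [max_eq_left (by linarith), max_eq_left (by linarith)]; ring
  · rw [abs_le]
    rcases max_cases (a - k) 0 with h | h <;> rcases max_cases (a - (k + 1)) 0 with h' | h' <;>
      constructor <;> linarith

/-- `relu (δ + s) - relu (δ - s) - s` is the projection of `δ` to `[-s, s]`. -/
lemma clip_facts (δ s : ℝ) (hs : 0 ≤ s) :
    |relu (δ + s) - relu (δ - s) - s| ≤ |δ| ∧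
    (s = 0 → relu (δ + s) - relu (δ - s) - s = 0) ∧
    (|δ| ≤ s → relu (δ + s) - relu (δ - s) - s = δ) := by
  unfold relu
  refine ⟨?_, ?_, ?_⟩
  · rw [abs_le]
    rcases abs_cases δ with h | h <;>
    rcases max_cases (δ + s) 0 with h1 | h1 <;> rcases max_cases (δ - s) 0 with h' | h' <;>
      constructor <;> linarith
  · rintro rfl; simp
  · intro h
    rw [abs_le] at h
    rw [max_eq_left (by linarith), max_eq_right (by linarith)]; ring

/-- Row `i` of the array of grid values `v`, interpolated linearly in `b` on `[0, N]` and extended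
constantly outside. -/
noncomputable def gridRow (N : ℕ) (v : ℕ → ℕ → ℝ) (i : ℕ) (b : ℝ) : ℝ :=
  v i 0 + ∑ k ∈ Finset.range N, (v i (k + 1) - v i k) * ramp k b

/-- The increment from row `i` to row `i + 1`, projected to `[-s, s]` with `s = D * relu (a - i)`.
It vanishes for `a ≤ i`, and for `i + 1 ≤ a` it is the full increment, provided that the latter is
at most `D` in absolute value. -/
noncomputable def gridInc (N : ℕ) (D : ℝ) (v : ℕ → ℕ → ℝ) (i : ℕ) (a b : ℝ) : ℝ :=
  relu ((gridRow N v (i + 1) b - gridRow N v i b) + D * relu (a - i)) -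
    relu ((gridRow N v (i + 1) b - gridRow N v i b) - D * relu (a - i)) - D * relu (a - i)

/-- Row `0` plus all clipped increments: an approximant of the array `v` at real arguments. -/
noncomputable def gridNet (N : ℕ) (D : ℝ) (v : ℕ → ℕ → ℝ) (a b : ℝ) : ℝ :=
  gridRow N v 0 b + ∑ i ∈ Finset.range N, gridInc N D v i a b

/-- `gridNet` built from the integer grid values of a `lam`-Lipschitz function `F` approximates `F`
at the projection of `(a, b)` to `[0, N]²`, for every real `a` and `b`. The clipping height `5 * lam`
bounds the row increments, since each row is within `2 * lam` of `F`. -/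
lemma gridNet_error (N : ℕ) (lam : ℝ) (hl : 0 ≤ lam) (F : ℝ → ℝ → ℝ)
    (hF : ∀ a b a' b', |F a b - F a' b'| ≤ lam * (|a - a'| + |b - b'|)) (a b : ℝ) :
    |gridNet N (5 * lam) (fun i k => F i k) a b - F (max 0 (min N a)) (max 0 (min N b))|
      ≤ 8 * lam := by
  set b' : ℝ := max 0 (min (N : ℝ) b) with hb'
  have hrow : ∀ i : ℕ, |gridRow N (fun i k => F i k) i b - F i b'| ≤ 2 * lam := by
    intro i
    obtain ⟨k, -, hk1, hk2⟩ := telescope N b lam (fun k => F i k)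
      (fun k => (F i (k + 1 : ℕ) - F i k) * ramp k b)
      (fun k => by
        rw [abs_mul]
        have h1 := hF i (k + 1 : ℕ) i k
        have h2 := (ramp_facts k b).2.2
        simp only [sub_self, abs_zero, zero_add, Nat.cast_add, Nat.cast_one,
          add_sub_cancel_left, abs_one, mul_one] at h1 ⊢
        calc _ ≤ lam * 1 := mul_le_mul h1 h2 (abs_nonneg _) hl
          _ = lam := mul_one _)
      (fun k hk => by rw [(ramp_facts k b).1 hk, mul_zero])
      (fun k hk => by rw [(ramp_facts k b).2.1 hk, mul_one])
    have h3 := hF i k i b'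
    rw [← hb', abs_sub_comm] at hk1
    simp only [sub_self, abs_zero, zero_add] at h3
    have h4 : lam * |(k : ℝ) - b'| ≤ lam * 1 := mul_le_mul_of_nonneg_left hk1 hl
    change |gridRow N (fun i k => F i k) i b - F i k| ≤ lam at hk2
    have h5 := abs_sub_le (gridRow N (fun i k => F i k) i b) (F i k) (F i b')
    linarith
  have hinc : ∀ i : ℕ, |gridRow N (fun i k => F i k) (i + 1) b - gridRow N (fun i k => F i k) i b|
      ≤ 5 * lam := by
    intro i
    have h1 := abs_le.1 (hrow (i + 1))
    have h2 := abs_le.1 (hrow i)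
    have h3 := hF (i + 1 : ℕ) b' i b'
    simp only [sub_self, abs_zero, add_zero, Nat.cast_add, Nat.cast_one,
          add_sub_cancel_left, abs_one, mul_one] at h3 h1
    have h3 := abs_le.1 h3
    rw [abs_le]
    constructor <;> linarith
  obtain ⟨i, -, hi1, hi2⟩ := telescope N a (5 * lam)
    (fun i => gridRow N (fun i k => F i k) i b)
    (fun i => gridInc N (5 * lam) (fun i k => F i k) i a b)
    (fun i => ((clip_facts _ _ (mul_nonneg (by linarith) (le_max_right _ _))).1).trans (hinc i))
    (fun i hi => (clip_facts _ _ (mul_nonneg (by linarith) (le_max_right _ _))).2.1 (by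
      rw [max_eq_right (by linarith), mul_zero]))
    (fun i hi => (clip_facts _ _ (mul_nonneg (by linarith) (le_max_right _ _))).2.2 (by
      refine (hinc i).trans ?_
      have : 1 ≤ relu (a - i) := le_trans (by linarith) (le_max_left _ _)
      exact le_mul_of_one_le_right (by linarith) this))
  set a' : ℝ := max 0 (min (N : ℝ) a) with ha'
  have h3 := hF i b' a' b'
  rw [abs_sub_comm] at hi1
  simp only [sub_self, abs_zero, add_zero] at h3
  have h4 : lam * |(i : ℝ) - a'| ≤ lam * 1 := mul_le_mul_of_nonneg_left hi1 hl
  change |gridNet N (5 * lam) (fun i k => F i k) a b - gridRow N (fun i k => F i k) i b| ≤ 5 * lam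
    at hi2
  have h5 := abs_sub_le (gridNet N (5 * lam) (fun i k => F i k) a b)
    (gridRow N (fun i k => F i k) i b) (F a' b')
  have h6 := abs_sub_le (gridRow N (fun i k => F i k) i b) (F i b') (F a' b')
  linarith [hrow i]

/-- `gridNet` costs two hidden layers of `O(N)` neurons: the rows all share the first-layer
neurons `relu (b - k)`. -/
lemma Lvl.gridNet {n w l N : ℕ} (hN : 1 ≤ N) (D : ℝ) (v : ℕ → ℕ → ℝ)
    {g₁ g₂ : (Fin n → ℝ) → ℝ} (h : Lvl n w l {g₁, g₂}) :
    Lvl n (w + 5 * N) (l + 2) {fun z => _root_.gridNet N D v (g₁ z) (g₂ z)} := by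
  classical
  -- `s₁` and `s₂` are the preactivations of the two appended layers
  let p₁ : ℕ → (Fin n → ℝ) → ℝ := fun k => g₁ - (k : ℝ) • 1
  let p₂ : ℕ → (Fin n → ℝ) → ℝ := fun k => g₂ - (k : ℝ) • 1
  let s₁ : Finset ((Fin n → ℝ) → ℝ) :=
    (Finset.range (N + 1)).image p₁ ∪ (Finset.range (N + 1)).image p₂
  let row : ℕ → (Fin n → ℝ) → ℝ := fun i z => gridRow N v i (g₂ z)
  let sw : ℕ → (Fin n → ℝ) → ℝ := fun i z => D * relu (g₁ z - i)
  let q₁ : ℕ → (Fin n → ℝ) → ℝ := fun i => row (i + 1) - row i + sw i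
  let q₂ : ℕ → (Fin n → ℝ) → ℝ := fun i => row (i + 1) - row i - sw i
  let r₁ : ℕ → (Fin n → ℝ) → ℝ := fun i z => relu (g₁ z - i)
  let s₂ : Finset ((Fin n → ℝ) → ℝ) :=
    (Finset.range N).image q₁ ∪ (Finset.range N).image q₂ ∪ (Finset.range N).image r₁ ∪
      {row 0, -row 0}
  let V₁ := Submodule.span ℝ
    (insert 1 ((fun h x => relu (h x)) '' (s₁ : Set ((Fin n → ℝ) → ℝ))))
  let V₂ := Submodule.span ℝ
    (insert 1 ((fun h x => relu (h x)) '' (s₂ : Set ((Fin n → ℝ) → ℝ))))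
  have hone₁ : (1 : (Fin n → ℝ) → ℝ) ∈ V₁ := Submodule.subset_span (Set.mem_insert _ _)
  have hr₁ : ∀ i < N + 1, r₁ i ∈ V₁ := by
    intro i hi
    refine Submodule.subset_span (Set.mem_insert_of_mem _ ⟨p₁ i, ?_, ?_⟩)
    · exact Finset.mem_coe.2 (Finset.mem_union_left _
        (Finset.mem_image_of_mem _ (Finset.mem_range.2 hi)))
    · funext z; simp [p₁, r₁]
  have hr₂ : ∀ i < N + 1, (fun z => relu (g₂ z - i)) ∈ V₁ := by
    intro i hi
    refine Submodule.subset_span (Set.mem_insert_of_mem _ ⟨p₂ i, ?_, ?_⟩)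
    · exact Finset.mem_coe.2 (Finset.mem_union_right _
        (Finset.mem_image_of_mem _ (Finset.mem_range.2 hi)))
    · funext z; simp [p₂]
  have hrow : ∀ i, row i ∈ V₁ := by
    intro i
    have : row i = v i 0 • 1 + ∑ k ∈ Finset.range N, (v i (k + 1) - v i k) •
        ((fun z => relu (g₂ z - k)) - (fun z => relu (g₂ z - (k + 1 : ℕ)))) := by
      funext z
      simp [row, gridRow, ramp, Finset.sum_apply]
    rw [this]
    refine Submodule.add_mem _ (Submodule.smul_mem _ _ hone₁)
      (Submodule.sum_mem _ fun k hk => Submodule.smul_mem _ _ ?_)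
    have hk := Finset.mem_range.1 hk
    exact Submodule.sub_mem _ (hr₂ k (by omega)) (hr₂ (k + 1) (by omega))
  have hsw : ∀ i < N, sw i ∈ V₁ := fun i hi =>
    Submodule.smul_mem V₁ D (hr₁ i (by omega))
  have hmem₂ : ∀ q ∈ s₂, (fun z => relu (q z)) ∈ V₂ := fun q hq =>
    Submodule.subset_span (Set.mem_insert_of_mem _ ⟨q, Finset.mem_coe.2 hq, rfl⟩)
  have hcard : ∀ (m : ℕ) (p : ℕ → (Fin n → ℝ) → ℝ), ((Finset.range m).image p).card ≤ m :=
    fun m p => Finset.card_image_le.trans (Finset.card_range m).le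
  have L₁ : Lvl n (w + 5 * N) (l + 1) (V₁ : Set ((Fin n → ℝ) → ℝ)) := by
    refine (h.mono_width (Nat.le_add_right w (5 * N))).step s₁ ?_ ?_ (le_refl _)
    · have := Finset.card_union_le ((Finset.range (N + 1)).image p₁)
        ((Finset.range (N + 1)).image p₂)
      have h1 := hcard (N + 1) p₁
      have h2 := hcard (N + 1) p₂
      change (_ ∪ _ : Finset _).card ≤ w + 5 * N
      omega
    · intro q hq
      have hq := Finset.mem_coe.1 hq
      simp only [s₁, Finset.mem_union, Finset.mem_image] at hq
      rcases hq with ⟨k, -, rfl⟩ | ⟨k, -, rfl⟩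
      · exact Submodule.sub_mem _ (Submodule.subset_span (by simp))
          (Submodule.smul_mem _ _ (Submodule.subset_span (by simp)))
      · exact Submodule.sub_mem _ (Submodule.subset_span (by simp))
          (Submodule.smul_mem _ _ (Submodule.subset_span (by simp)))
  refine L₁.step s₂ ?_ ?_ ?_
  · have e1 := Finset.card_union_le ((Finset.range N).image q₁ ∪ (Finset.range N).image q₂ ∪
      (Finset.range N).image r₁) {row 0, -row 0}
    have e2 := Finset.card_union_le ((Finset.range N).image q₁ ∪ (Finset.range N).image q₂)
      ((Finset.range N).image r₁)
    have e3 := Finset.card_union_le ((Finset.range N).image q₁) ((Finset.range N).image q₂)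
    have h1 := hcard N q₁
    have h2 := hcard N q₂
    have h3 := hcard N r₁
    have h4 : ({row 0, -row 0} : Finset ((Fin n → ℝ) → ℝ)).card ≤ 2 := Finset.card_le_two
    change (_ ∪ _ ∪ _ ∪ _ : Finset _).card ≤ w + 5 * N
    omega
  · intro q hq
    refine Submodule.subset_span (Set.mem_insert_of_mem _ ?_)
    have hq := Finset.mem_coe.1 hq
    simp only [s₂, Finset.mem_union, Finset.mem_image, Finset.mem_insert,
      Finset.mem_singleton, Finset.mem_range] at hq
    rcases hq with ((⟨k, hk, rfl⟩ | ⟨k, hk, rfl⟩) | ⟨k, hk, rfl⟩) | rfl | rfl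
    · exact Submodule.add_mem _ (Submodule.sub_mem _ (hrow _) (hrow _)) (hsw k hk)
    · exact Submodule.sub_mem _ (Submodule.sub_mem _ (hrow _) (hrow _)) (hsw k hk)
    · exact hr₁ k (by omega)
    · exact hrow 0
    · exact Submodule.neg_mem _ (hrow 0)
  · rintro _ rfl
    have : (fun z => _root_.gridNet N D v (g₁ z) (g₂ z)) =
        ((fun z => relu (row 0 z)) - (fun z => relu ((-row 0) z))) +
        ∑ i ∈ Finset.range N, ((fun z => relu (q₁ i z)) - (fun z => relu (q₂ i z)) -
          D • (fun z => relu (r₁ i z))) := by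
      funext z
      have hrr : ∀ i, relu (r₁ i z) = relu (g₁ z - i) := fun i => max_eq_left (le_max_right _ _)
      simp only [Pi.add_apply, Pi.sub_apply, Finset.sum_apply, Pi.smul_apply, hrr, Pi.neg_apply,
        relu_sub_relu_neg, smul_eq_mul]
      rfl
    rw [this]
    refine Submodule.add_mem V₂ (Submodule.sub_mem V₂ (hmem₂ _ ?_) (hmem₂ _ ?_))
      (Submodule.sum_mem V₂ fun i hi => Submodule.sub_mem V₂ (Submodule.sub_mem V₂
        (hmem₂ _ ?_) (hmem₂ _ ?_)) (Submodule.smul_mem V₂ D (hmem₂ _ ?_)))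
    · simp [s₂]
    · simp [s₂]
    · exact Finset.mem_union_left _ (Finset.mem_union_left _ (Finset.mem_union_left _
        (Finset.mem_image_of_mem _ hi)))
    · exact Finset.mem_union_left _ (Finset.mem_union_left _ (Finset.mem_union_right _
        (Finset.mem_image_of_mem _ hi)))
    · exact Finset.mem_union_left _ (Finset.mem_union_right _ (Finset.mem_image_of_mem _ hi))

/-- A function that is `L`-Lipschitz on `[-B, B]²` can be applied to two computed functions at the
cost of two more hidden layers, `5 N` more neurons per layer and an error `16 L B / N`, plus the
propagated errors of the arguments. -/
lemma Lvl.apply₂ {n w₁ w₂ l N : ℕ} (hN : 1 ≤ N) {B L : ℝ} (hB : 0 < B) (hL : 0 ≤ L)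
    (f : ℝ → ℝ → ℝ)
    (hf : ∀ a b a' b', |a| ≤ B → |b| ≤ B → |a'| ≤ B → |b'| ≤ B →
      |f a b - f a' b'| ≤ L * (|a - a'| + |b - b'|))
    {g₁ g₂ : (Fin n → ℝ) → ℝ} (h₁ : Lvl n w₁ l {g₁}) (h₂ : Lvl n w₂ l {g₂}) :
    ∃ G, Lvl n (w₁ + w₂ + 5 * N) (l + 2) {G} ∧ ∀ z a b ε₁ ε₂, |a| ≤ B → |b| ≤ B →
      |g₁ z - a| ≤ ε₁ → |g₂ z - b| ≤ ε₂ → |G z - f a b| ≤ 16 * L * B / N + L * (ε₁ + ε₂) := by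
  have hN0 : (0 : ℝ) < N := by exact_mod_cast hN
  set h : ℝ := 2 * B / N with hh
  have hh0 : 0 < h := by positivity
  have hNh : N * h = 2 * B := by rw [hh]; field_simp
  -- projection to `[-B, B]`, in grid coordinates
  let cl : ℝ → ℝ := fun a => max (-B) (min B (h * a - B))
  have hcl : ∀ a, |cl a| ≤ B := fun a => abs_le.2 ⟨le_max_left _ _,
    max_le (by linarith) (min_le_left _ _)⟩
  have hclip : ∀ a b, |cl a - cl b| ≤ h * |a - b| := by
    intro a b
    have h1 : |cl a - cl b| ≤ |min B (h * a - B) - min B (h * b - B)| := by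
      have := abs_max_sub_max_le_max (-B) (min B (h * a - B)) (-B) (min B (h * b - B))
      simpa using this
    have h2 : |min B (h * a - B) - min B (h * b - B)| ≤ |(h * a - B) - (h * b - B)| := by
      have := abs_min_sub_min_le_max B (h * a - B) B (h * b - B)
      simpa using this
    refine h1.trans (h2.trans ?_)
    rw [show (h * a - B) - (h * b - B) = h * (a - b) by ring, abs_mul, abs_of_pos hh0]
  let F : ℝ → ℝ → ℝ := fun a b => f (cl a) (cl b)
  have hF : ∀ a b a' b', |F a b - F a' b'| ≤ (L * h) * (|a - a'| + |b - b'|) := by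
    intro a b a' b'
    refine (hf _ _ _ _ (hcl a) (hcl b) (hcl a') (hcl b')).trans ?_
    rw [mul_assoc]
    refine mul_le_mul_of_nonneg_left ?_ hL
    linarith [hclip a a', hclip b b']
  let k₁ : (Fin n → ℝ) → ℝ := fun z => (g₁ z + B) / h
  let k₂ : (Fin n → ℝ) → ℝ := fun z => (g₂ z + B) / h
  have hk : Lvl n (w₁ + w₂) l {k₁, k₂} := by
    refine (h₁.union h₂).of_subset_span ?_
    have e1 : k₁ = h⁻¹ • (g₁ + B • 1) := by funext z; simp [k₁]; field_simp
    have e2 : k₂ = h⁻¹ • (g₂ + B • 1) := by funext z; simp [k₂]; field_simp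
    rw [e1, e2]
    rintro _ (rfl | rfl)
    · exact Submodule.smul_mem _ _ (Submodule.add_mem _ (Submodule.subset_span (by simp))
        (Submodule.smul_mem _ _ (Submodule.subset_span (by simp))))
    · exact Submodule.smul_mem _ _ (Submodule.add_mem _ (Submodule.subset_span (by simp))
        (Submodule.smul_mem _ _ (Submodule.subset_span (by simp))))
  refine ⟨_, hk.gridNet hN (5 * (L * h)) (fun i k => F i k), ?_⟩
  intro z a b ε₁ ε₂ ha hb h1 h2
  have herr := gridNet_error N (L * h) (by positivity) F hF (k₁ z) (k₂ z)
  -- projecting to `[0, N]` in grid coordinates is projecting to `[-B, B]`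
  have hproj : ∀ y c ε : ℝ, |c| ≤ B → |y - c| ≤ ε →
      |cl (max 0 (min N ((y + B) / h))) - c| ≤ ε := by
    intro y c ε hc hy
    have e : c = cl ((c + B) / h) := by
      have := abs_le.1 hc
      have e0 : h * ((c + B) / h) - B = c := by field_simp; ring
      simp only [cl, e0]
      rw [min_eq_right this.2, max_eq_right this.1]
    have h0 : 0 ≤ (c + B) / h := div_nonneg (by linarith [(abs_le.1 hc).1]) hh0.le
    have h0' : (c + B) / h ≤ N := by
      rw [div_le_iff₀ hh0, hNh]; linarith [(abs_le.1 hc).2]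
    have e' : (c + B) / h = max 0 (min (N : ℝ) ((c + B) / h)) := by
      rw [min_eq_right h0', max_eq_right h0]
    have h3 : |max 0 (min (N : ℝ) ((y + B) / h)) - (c + B) / h| ≤
        |(y + B) / h - (c + B) / h| := by
      conv_lhs => rw [e']
      have t1 := abs_max_sub_max_le_max 0 (min (N : ℝ) ((y + B) / h)) 0
        (min (N : ℝ) ((c + B) / h))
      have t2 := abs_min_sub_min_le_max (N : ℝ) ((y + B) / h) N ((c + B) / h)
      simp only [sub_self, abs_zero] at t1 t2
      exact t1.trans (max_le (abs_nonneg _) (t2.trans (max_le (abs_nonneg _) le_rfl)))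
    calc |cl (max 0 (min N ((y + B) / h))) - c|
        = |cl (max 0 (min N ((y + B) / h))) - cl ((c + B) / h)| := by rw [← e]
      _ ≤ h * |(y + B) / h - (c + B) / h| :=
          (hclip _ _).trans (mul_le_mul_of_nonneg_left h3 hh0.le)
      _ = |y - c| := by
          rw [← sub_div, abs_div, abs_of_pos hh0]
          field_simp
          congr 1
          ring
      _ ≤ ε := hy
  have h3 := hf _ _ a b (hcl (max 0 (min N (k₁ z)))) (hcl (max 0 (min N (k₂ z)))) ha hb
  have h4 : L * (|cl (max 0 (min N (k₁ z))) - a| + |cl (max 0 (min N (k₂ z))) - b|) ≤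
      L * (ε₁ + ε₂) :=
    mul_le_mul_of_nonneg_left (add_le_add (hproj _ _ _ ha h1) (hproj _ _ _ hb h2)) hL
  have h5 := abs_sub_le (_root_.gridNet N (5 * (L * h)) (fun i k => F i k) (k₁ z) (k₂ z))
    (F (max 0 (min N (k₁ z))) (max 0 (min N (k₂ z)))) (f a b)
  have h6 : 16 * L * B / N = 8 * (L * h) := by rw [hh]; ring
  rw [h6]
  exact h5.trans (add_le_add herr (h3.trans h4))

/-! ### The time change -/

lemma abs_exp_sub_le {C a b : ℝ} (ha : a ≤ C) (hb : b ≤ C) :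
    |Real.exp a - Real.exp b| ≤ Real.exp C * |a - b| := by
  wlog h : b ≤ a generalizing a b
  · rw [abs_sub_comm, abs_sub_comm a b]
    exact this hb ha (le_of_not_ge h)
  have h1 : Real.exp b ≤ Real.exp a := Real.exp_le_exp.2 h
  rw [abs_of_nonneg (by linarith), abs_of_nonneg (by linarith)]
  have h2 : Real.exp b = Real.exp a * Real.exp (b - a) := by rw [← Real.exp_add]; congr 1; ring
  have h3 := Real.add_one_le_exp (b - a)
  have h4 : Real.exp a ≤ Real.exp C := Real.exp_le_exp.2 ha
  have h5 := Real.exp_pos a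
  nlinarith

lemma abs_integral_sub_le {c2 : ℝ} {β : ℝ → ℝ} (hc : Continuous β) (h0 : ∀ t, 0 ≤ β t)
    (hβ : ∀ t : ℝ, 0 < t → β t ≤ c2) {s t : ℝ} (hs : 0 ≤ s) (ht : 0 ≤ t) :
    |(∫ r in (0 : ℝ)..s, β r) - ∫ r in (0 : ℝ)..t, β r| ≤ c2 * |s - t| := by
  rw [intervalIntegral.integral_interval_sub_left (hc.intervalIntegrable _ _)
    (hc.intervalIntegrable _ _), ← Real.norm_eq_abs]
  refine intervalIntegral.norm_integral_le_of_norm_le_const fun r hr => ?_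
  have hr0 : 0 < r := (le_min ht hs).trans_lt hr.1
  rw [Real.norm_eq_abs, abs_of_nonneg (h0 r)]
  exact hβ r hr0

/-- `(y, t) ↦ y / m_t` is Lipschitz on `[-1, 1]²`, with `t` replaced by its positive part. -/
lemma scaled_lipschitz {c2 : ℝ} (hc2 : 1 < c2) {β : ℝ → ℝ} (hc : Continuous β)
    (h0 : ∀ t, 0 ≤ β t) (hβ : ∀ t : ℝ, 0 < t → β t ≤ c2) (a b a' b' : ℝ)
    (hb : |b| ≤ 1) (ha' : |a'| ≤ 1) (hb' : |b'| ≤ 1) :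
    |a * Real.exp (∫ r in (0 : ℝ)..(max b 0), β r) -
      a' * Real.exp (∫ r in (0 : ℝ)..(max b' 0), β r)| ≤
      c2 * Real.exp c2 * (|a - a'| + |b - b'|) := by
  have hIle : ∀ s : ℝ, |s| ≤ 1 → (∫ r in (0 : ℝ)..(max s 0), β r) ≤ c2 := by
    intro s hs
    have h1 := abs_integral_sub_le hc h0 hβ (le_max_right s 0) le_rfl
    rw [intervalIntegral.integral_same, sub_zero, sub_zero, abs_of_nonneg (le_max_right s 0)] at h1
    have h2 : max s 0 ≤ 1 := max_le (abs_le.1 hs).2 zero_le_one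
    have h3 := le_abs_self (∫ r in (0 : ℝ)..(max s 0), β r)
    nlinarith
  set I := ∫ r in (0 : ℝ)..(max b 0), β r with hI
  set I' := ∫ r in (0 : ℝ)..(max b' 0), β r with hI'
  have hII : |I - I'| ≤ c2 * |b - b'| := by
    refine (abs_integral_sub_le hc h0 hβ (le_max_right b 0) (le_max_right b' 0)).trans ?_
    refine mul_le_mul_of_nonneg_left ?_ (by linarith)
    have := abs_max_sub_max_le_max b 0 b' 0
    simpa using this
  have hE : Real.exp I ≤ Real.exp c2 := Real.exp_le_exp.2 (hIle b hb)
  have hEE := abs_exp_sub_le (hIle b hb) (hIle b' hb')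
  have e : a * Real.exp I - a' * Real.exp I' =
    (a - a') * Real.exp I + a' * (Real.exp I - Real.exp I') := by ring
  rw [e]
  refine (abs_add_le _ _).trans ?_
  rw [abs_mul, abs_mul, abs_of_pos (Real.exp_pos I)]
  have hpos := Real.exp_pos c2
  have t1 : |a - a'| * Real.exp I ≤ c2 * Real.exp c2 * |a - a'| := by
    have := mul_le_mul_of_nonneg_left hE (abs_nonneg (a - a'))
    have : 1 * (Real.exp c2 * |a - a'|) ≤ c2 * (Real.exp c2 * |a - a'|) :=
      mul_le_mul_of_nonneg_right hc2.le (by positivity)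
    linarith
  have t2 : |a'| * |Real.exp I - Real.exp I'| ≤ c2 * Real.exp c2 * |b - b'| := by
    calc |a'| * |Real.exp I - Real.exp I'| ≤ 1 * (Real.exp c2 * (c2 * |b - b'|)) :=
          mul_le_mul ha' (hEE.trans (mul_le_mul_of_nonneg_left hII hpos.le)) (abs_nonneg _)
            zero_le_one
      _ = _ := by ring
  linarith

/-! ### Products -/

lemma mul_lipschitz {B : ℝ} (a b a' b' : ℝ) (hb : |b| ≤ B) (ha' : |a'| ≤ B) :
    |a * b - a' * b'| ≤ B * (|a - a'| + |b - b'|) := by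
  have e : a * b - a' * b' = (a - a') * b + a' * (b - b') := by ring
  rw [e]
  refine (abs_add_le _ _).trans ?_
  rw [abs_mul, abs_mul]
  have h1 := mul_le_mul_of_nonneg_left hb (abs_nonneg (a - a'))
  have h2 := mul_le_mul_of_nonneg_right ha' (abs_nonneg (b - b'))
  linarith

/-- Error constant of the `k`-fold product: factors with error `Df / N`, values bounded by `B`. -/
noncomputable def prodErr (B Df : ℝ) : ℕ → ℝ
  | 0 => 0
  | k + 1 => 16 * B * B + B * (prodErr B Df k + Df)

lemma prodErr_nonneg {B Df : ℝ} (hB : 0 ≤ B) (hD : 0 ≤ Df) : ∀ k, 0 ≤ prodErr B Df k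
  | 0 => le_rfl
  | k + 1 => by
    have := prodErr_nonneg hB hD k
    unfold prodErr
    positivity

/-- Multiplying `K` computed factors one at a time with `Lvl.apply₂`. -/
lemma Lvl.prod {n w l N K : ℕ} (hN : 1 ≤ N) (hw : 2 ≤ w) {M Df : ℝ} (hM : 0 < M)
    {ι : Type*} [DecidableEq ι] (Ω : Set (Fin n → ℝ)) (φ : ι → (Fin n → ℝ) → ℝ)
    (g : ι → (Fin n → ℝ) → ℝ) (S : Finset ι) (hS : S.card ≤ K)
    (hφ : ∀ e ∈ S, ∀ z ∈ Ω, |φ e z| ≤ M)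
    (hg : ∀ e ∈ S, Lvl n w l {g e}) (hgφ : ∀ e ∈ S, ∀ z ∈ Ω, |g e z - φ e z| ≤ Df / N) :
    ∃ P, Lvl n (w + S.card * (w + 5 * N)) (l + 2 * S.card) {P} ∧
      ∀ z ∈ Ω, |P z - ∏ e ∈ S, φ e z| ≤ prodErr ((M + 1) ^ (K + 1)) Df S.card / N := by
  induction S using Finset.induction_on with
  | empty =>
    refine ⟨1, ?_, fun z _ => by simp [prodErr]⟩
    have h0 : Lvl n w 0 {(1 : (Fin n → ℝ) → ℝ)} := by
      rintro _ rfl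
      exact Submodule.subset_span (Set.mem_insert _ _)
    simpa using h0.add_depth hw l
  | insert e S he ih =>
    rw [Finset.card_insert_of_notMem he] at hS ⊢
    obtain ⟨P, hP, hPe⟩ := ih (by omega) (fun e' h => hφ e' (Finset.mem_insert_of_mem h))
      (fun e' h => hg e' (Finset.mem_insert_of_mem h))
      (fun e' h => hgφ e' (Finset.mem_insert_of_mem h))
    have heS := Finset.mem_insert_self e S
    set B := (M + 1) ^ (K + 1) with hBdef
    have hB : 0 < B := by positivity
    have hMB : M ≤ B := by
      have : (M + 1) ^ 1 ≤ (M + 1) ^ (K + 1) := pow_le_pow_right₀ (by linarith) (by omega)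
      linarith
    obtain ⟨G, hG, hGe⟩ := Lvl.apply₂ hN hB hB.le (fun a b => a * b)
      (fun a b a' b' _ hb ha' _ => mul_lipschitz a b a' b' hb ha') hP
      ((hg e heS).add_depth hw (2 * S.card))
    refine ⟨G, ?_, fun z hz => ?_⟩
    · convert hG using 1 <;> ring
    · rw [Finset.prod_insert he, mul_comm]
      have hprod : |∏ e ∈ S, φ e z| ≤ B := by
        rw [Finset.abs_prod]
        calc ∏ e ∈ S, |φ e z| ≤ ∏ e ∈ S, (M + 1) :=
              Finset.prod_le_prod (fun _ _ => abs_nonneg _) fun e' h =>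
                (hφ e' (Finset.mem_insert_of_mem h) z hz).trans (by linarith)
          _ = (M + 1) ^ S.card := by rw [Finset.prod_const]
          _ ≤ B := pow_le_pow_right₀ (by linarith) (by omega)
      refine (hGe z _ _ _ _ hprod ((hφ e heS z hz).trans hMB) (hPe z hz)
        (hgφ e heS z hz)).trans (le_of_eq ?_)
      rw [prodErr]
      ring

/-- there are `c ≥ 1` and `N0`, depending only on `(d, |S'|, L0, M, c2)`, such
that for every `N ≥ N0` some ReLU network of depth at most `c` and width at most `c N log N`
approximates `(t,x) ↦ ∏_{(i,j)∈S'} f_{i,j}(x_i/m_t, x_j/m_t)` uniformly over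
`Ω_N = {(t,x) : t ∈ [N^{-10}, N^{-1/(10d)}], x ∈ [-m_t, m_t]^d}` with error `c N^{-1}`. -/
theorem product_term_network_approximation
    (d K : ℕ) (hd : 1 ≤ d) (L0 M c2 : ℝ) (hL0 : 0 < L0) (hM : 0 < M) (hc2 : 1 < c2) :
    ∃ c : ℝ, 1 ≤ c ∧ ∃ N0 : ℕ,
      ∀ (S' : Finset (Fin d × Fin d)), S'.card = K → (∀ e ∈ S', e.1 < e.2) →
      ∀ f : Fin d → Fin d → ℝ → ℝ → ℝ,
        (∀ e ∈ S', ∀ a b a' b' : ℝ,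
          |f e.1 e.2 a b - f e.1 e.2 a' b'| ≤ L0 * Real.sqrt ((a - a') ^ 2 + (b - b') ^ 2)) →
        (∀ e ∈ S', ∀ a b : ℝ, |f e.1 e.2 a b| ≤ M) →
      ∀ betaF : ℝ → ℝ, ContDiff ℝ (⊤ : ℕ∞) betaF → (∀ t, 0 ≤ betaF t) →
        (∀ t : ℝ, 0 < t → 1 / c2 ≤ betaF t ∧ betaF t ≤ c2) →
        (∀ ℓ : ℕ, 1 ≤ ℓ → ∀ t : ℝ, 0 < t → |iteratedDeriv ℓ betaF t| ≤ c2) →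
      ∀ N : ℕ, N0 ≤ N →
        ∃ (L W : ℕ) (net : ReLUNet (d + 1) 1 L W),
          (L : ℝ) ≤ c ∧ (W : ℝ) ≤ c * N * Real.log N ∧
          ∀ (t : ℝ) (x : Fin d → ℝ),
            (N : ℝ) ^ (-(10 : ℝ)) ≤ t → t ≤ (N : ℝ) ^ (-(1 : ℝ) / (10 * d)) →
            (∀ i, |x i| ≤ mT betaF t) →
            |net.eval (Fin.snoc x t) 0 -
                ∏ e ∈ S', f e.1 e.2 (x e.1 / mT betaF t) (x e.2 / mT betaF t)|
              ≤ c * (N : ℝ)⁻¹ := by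
  classical
  set E := c2 * Real.exp c2 with hE
  have hE0 : 0 < E := by positivity
  set Df : ℝ := 16 * L0 + L0 * (16 * E + 16 * E) with hDf
  have hDf0 : 0 ≤ Df := by positivity
  set B : ℝ := (M + 1) ^ (K + 1) with hB
  have hD0 : 0 ≤ prodErr B Df K := prodErr_nonneg (by positivity) hDf0 K
  refine ⟨1 + (4 + 2 * K) + (15 + K * 20) + prodErr B Df K, ?_, 3, ?_⟩
  · have : (0 : ℝ) ≤ K := Nat.cast_nonneg K
    linarith
  intro S' hcard _ f hLip hbd β hβ hβ0 hβ1 _ N hN3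
  have hN : 1 ≤ N := by omega
  have hNr : (3 : ℝ) ≤ N := by exact_mod_cast hN3
  have hK0 : (0 : ℝ) ≤ K := Nat.cast_nonneg K
  have hcont : Continuous β := hβ.continuous
  have hβle : ∀ t : ℝ, 0 < t → β t ≤ c2 := fun t ht => (hβ1 t ht).2
  -- the points `(x, t)` with `t ∈ [0, 1]` and `|x i| ≤ m_t`
  let Ω : Set (Fin (d + 1) → ℝ) := {z | 0 ≤ z (Fin.last d) ∧ z (Fin.last d) ≤ 1 ∧
    ∀ i : Fin d, |z i.castSucc| ≤ mT β (z (Fin.last d))}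
  have hm0 : ∀ t, 0 < mT β t := fun t => Real.exp_pos _
  have hm1 : ∀ t, 0 ≤ t → mT β t ≤ 1 := by
    intro t ht
    refine Real.exp_le_one_iff.2 (neg_nonpos.2 ?_)
    exact intervalIntegral.integral_nonneg ht fun r _ => hβ0 r
  have hcoord : ∀ j : Fin (d + 1), Lvl (d + 1) 0 0 {fun z => z j} := by
    rintro j _ rfl
    exact Submodule.subset_span (Set.mem_insert_of_mem _ ⟨j, rfl⟩)
  -- stage 1: the rescaled coordinates
  have hU : ∀ i : Fin d, ∃ u, Lvl (d + 1) (5 * N) 2 {u} ∧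
      ∀ z ∈ Ω, |u z - z i.castSucc / mT β (z (Fin.last d))| ≤ 16 * E / N := by
    intro i
    obtain ⟨u, hu, hue⟩ := Lvl.apply₂ hN one_pos hE0.le
      (fun a b => a * Real.exp (∫ r in (0 : ℝ)..(max b 0), β r))
      (fun a b a' b' _ hb ha' hb' => scaled_lipschitz hc2 hcont hβ0 hβle a b a' b' hb ha' hb')
      (hcoord i.castSucc) (hcoord (Fin.last d))
    refine ⟨u, by simpa using hu, fun z hz => ?_⟩
    obtain ⟨hz0, hz1, hzi⟩ := hz
    have h := hue z (z i.castSucc) (z (Fin.last d)) 0 0 ((hzi i).trans (hm1 _ hz0))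
      (abs_le.2 ⟨by linarith, hz1⟩) (by simp) (by simp)
    rw [max_eq_left hz0] at h
    rw [mT, Real.exp_neg, div_inv_eq_mul]
    simpa using h
  choose u hu hue using hU
  -- stage 2: the factors
  have hG : ∀ e : Fin d × Fin d, e ∈ S' → ∃ g, Lvl (d + 1) (15 * N) 4 {g} ∧
      ∀ z ∈ Ω, |g z - f e.1 e.2 (z e.1.castSucc / mT β (z (Fin.last d)))
        (z e.2.castSucc / mT β (z (Fin.last d)))| ≤ Df / N := by
    intro e he
    obtain ⟨g, hg, hge⟩ := Lvl.apply₂ hN one_pos hL0.le (f e.1 e.2)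
      (fun a b a' b' _ _ _ _ => (hLip e he a b a' b').trans (mul_le_mul_of_nonneg_left (by
        rw [Real.sqrt_le_left (by positivity), ← sq_abs (a - a'), ← sq_abs (b - b')]
        nlinarith [mul_nonneg (abs_nonneg (a - a')) (abs_nonneg (b - b'))]) hL0.le))
      (hu e.1) (hu e.2)
    refine ⟨g, by convert hg using 1; ring, fun z hz => ?_⟩
    have hle : ∀ i : Fin d, |z i.castSucc / mT β (z (Fin.last d))| ≤ 1 := by
      intro i
      rw [abs_div, abs_of_pos (hm0 _), div_le_one (hm0 _)]
      exact hz.2.2 i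
    refine (hge z _ _ _ _ (hle e.1) (hle e.2) (hue e.1 z hz) (hue e.2 z hz)).trans (le_of_eq ?_)
    rw [hDf]
    ring
  choose! g hg hge using hG
  -- stage 3: the product
  obtain ⟨P, hP, hPe⟩ := Lvl.prod hN (by omega) hM Ω
    (fun (e : Fin d × Fin d) z => f e.1 e.2 (z e.1.castSucc / mT β (z (Fin.last d)))
        (z e.2.castSucc / mT β (z (Fin.last d)))) g S' hcard.le
    (fun e he z _ => hbd e he _ _) hg hge
  rw [hcard] at hP hPe
  rw [show 4 + 2 * K = (3 + 2 * K) + 1 by ring] at hP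
  obtain ⟨net, hnet⟩ := hP.exists_net
  refine ⟨_, _, net, ?_, ?_, ?_⟩
  · push_cast
    linarith
  · have hlog : 1 ≤ Real.log N := by
      rw [Real.le_log_iff_exp_le (by linarith)]
      linarith [Real.exp_one_lt_d9]
    push_cast
    have h1 : (15 * N + K * (15 * N + 5 * N) : ℝ) = (15 + K * 20) * N := by ring
    rw [h1]
    calc ((15 + K * 20) * N : ℝ) ≤ (1 + (4 + 2 * K) + (15 + K * 20) + prodErr B Df K) * N :=
          mul_le_mul_of_nonneg_right (by linarith) (by linarith)
      _ ≤ _ := le_mul_of_one_le_right (by positivity) hlog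
  · intro t x ht0 ht1 hx
    have hz : (Fin.snoc x t : Fin (d + 1) → ℝ) ∈ Ω := by
      refine ⟨?_, ?_, fun i => ?_⟩
      · rw [Fin.snoc_last]
        exact (Real.rpow_nonneg (by linarith) _).trans ht0
      · rw [Fin.snoc_last]
        refine ht1.trans (Real.rpow_le_one_of_one_le_of_nonpos (by linarith) ?_)
        exact div_nonpos_of_nonpos_of_nonneg (by norm_num) (by positivity)
      · simpa using hx i
    have h := hPe _ hz
    simp only [Fin.snoc_last, Fin.snoc_castSucc] at h
    rw [hnet]
    refine h.trans ?_
    rw [div_eq_mul_inv]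
    exact mul_le_mul_of_nonneg_right (by linarith) (by positivity)
end
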